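/- arXiv:1709.03218 — 5 statements merged into one kernel-verified Lean document; each statement's English description precedes it below -/
import Mathlib

section
/- Fix an integer d ≥ 2. For every integer n ≥ 2, the number of loopless generalized chord diagrams satisfies b(n) = a(n,0) − Σ_{k=0}^{d−2} C(d(n−1)−k−1, d−2−k) · a(n−1,k). -/
/-- A generalized linear diagram on points `1,…,N` whose blocks all have size `d`:
a partition of `{1,…,N}` into blocks of size `d`. -/
def IsLinearDiagram (N d : ℕ) (P : Finset (Finset ℕ)) : Prop :=
  (∀ b ∈ P, b.card = d) ∧ (∀ b ∈ P, ∀ x ∈ b, x ∈ Finset.Icc 1 N) ∧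
    ∀ x ∈ Finset.Icc 1 N, ∃! b : Finset ℕ, b ∈ P ∧ x ∈ b

/-- The number of loops of a linear diagram on points `1,…,N`: indices `i` with
`1 ≤ i ≤ N - 1` such that `i` and `i + 1` lie in the same block. -/
noncomputable def linLoops (N : ℕ) (P : Finset (Finset ℕ)) : ℕ :=
  Set.ncard {i : ℕ | 1 ≤ i ∧ i + 1 ≤ N ∧ ∃ b ∈ P, i ∈ b ∧ i + 1 ∈ b}

/-- `numA d n k` : the number of generalized linear diagrams of order `(n,d)`
with exactly `k` loops. -/
noncomputable def numA (d n k : ℕ) : ℕ :=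
  Set.ncard {P : Finset (Finset ℕ) | IsLinearDiagram (n * d) d P ∧ linLoops (n * d) P = k}

/-- `numA` with an integer loop index, zero for negative indices. -/
noncomputable def numAZ (d n : ℕ) (k : ℤ) : ℕ :=
  if 0 ≤ k then numA d n k.toNat else 0

/-- Binomial coefficient with integer arguments: `0` when `y < 0` or `y > x`. -/
def iChoose (x y : ℤ) : ℕ :=
  if 0 ≤ y ∧ y ≤ x then x.toNat.choose y.toNat else 0

/-- A generalized chord diagram on `ZMod N` whose blocks all have size `d`:
a partition of `ZMod N` into blocks of size `d`. -/
def IsChordDiagram (N d : ℕ) (P : Finset (Finset (ZMod N))) : Prop :=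
  (∀ b ∈ P, b.card = d) ∧ ∀ x : ZMod N, ∃! b : Finset (ZMod N), b ∈ P ∧ x ∈ b

/-- A chord diagram is loopless if no residues `i`, `i+1` lie in the same block. -/
def ChordLoopless (N : ℕ) (P : Finset (Finset (ZMod N))) : Prop :=
  ∀ i : ZMod N, ∀ b ∈ P, i ∈ b → i + 1 ∈ b → False

/-- `numB d n` : the number of loopless generalized chord diagrams of order `(n,d)`. -/
noncomputable def numB (d n : ℕ) : ℕ :=
  Set.ncard {P : Finset (Finset (ZMod (n * d))) |
    IsChordDiagram (n * d) d P ∧ ChordLoopless (n * d) P}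

/-- The shift `i ↦ i + v` modulo `M`, on the representatives `1,…,M`. -/
def shiftMod (M v i : ℕ) : ℕ := if i + v ≤ M then i + v else i + v - M

/-- An `m`-symmetric linear diagram with sector size `v` and blocks of size `d`:
a partition of `{1,…,m·v}` into blocks of size `d` invariant under the shift by `v`
modulo `m·v`. -/
def IsMSymLinear (d m v : ℕ) (P : Finset (Finset ℕ)) : Prop :=
  IsLinearDiagram (m * v) d P ∧ ∀ b ∈ P, b.image (shiftMod (m * v) v) ∈ P

/-- The number of loops lying in sector `s` (sectors numbered from `0`):
indices `i` with `s·v + 1 ≤ i ≤ (s+1)·v - 1` such that `i` and `i + 1` lie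
in the same block. -/
noncomputable def sectorLoops (v : ℕ) (P : Finset (Finset ℕ)) (s : ℕ) : ℕ :=
  Set.ncard {i : ℕ | s * v + 1 ≤ i ∧ i + 1 ≤ (s + 1) * v ∧ ∃ b ∈ P, i ∈ b ∧ i + 1 ∈ b}

/-- `numAtil d m v k` : the number of `m`-symmetric linear diagrams with sector size `v`,
blocks of size `d`, and exactly `k` loops in each sector (`ã(v,k;m,d)`). -/
noncomputable def numAtil (d m v k : ℕ) : ℕ :=
  Set.ncard {P : Finset (Finset ℕ) |
    IsMSymLinear d m v P ∧ ∀ s < m, sectorLoops v P s = k}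
namespace CDL
open Finset

/-- partition of X into blocks of size d -/
def Part {α : Type*} (X : Finset α) (d : ℕ) (P : Finset (Finset α)) : Prop :=
  (∀ b ∈ P, b.card = d) ∧ (∀ b ∈ P, b ⊆ X) ∧ ∀ x ∈ X, ∃! b : Finset α, b ∈ P ∧ x ∈ b

/-- same block -/
def Rel {α : Type*} (P : Finset (Finset α)) (x y : α) : Prop := ∃ b ∈ P, x ∈ b ∧ y ∈ b

/-- transport -/
def tr {α β : Type*} [DecidableEq β] (f : α → β) (P : Finset (Finset α)) : Finset (Finset β) :=
  P.image (fun b => b.image f)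

section
variable {α β : Type*} [DecidableEq α] [DecidableEq β]

lemma Part.uniq {X : Finset α} {d : ℕ} {P : Finset (Finset α)} (h : Part X d P)
    {b c : Finset α} (hb : b ∈ P) (hc : c ∈ P) {x : α} (hxb : x ∈ b) (hxc : x ∈ c) : b = c :=
  (h.2.2 x (h.2.1 b hb hxb)).unique ⟨hb, hxb⟩ ⟨hc, hxc⟩

lemma Part.tr {X : Finset α} {d : ℕ} {P : Finset (Finset α)} (h : Part X d P)
    {f : α → β} (hf : Set.InjOn f X) : Part (X.image f) d (tr f P) := by
  refine ⟨?_, ?_, ?_⟩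
  · intro b hb
    obtain ⟨c, hc, rfl⟩ := mem_image.1 hb
    rw [card_image_of_injOn (hf.mono (by exact_mod_cast h.2.1 c hc)), h.1 c hc]
  · intro b hb
    obtain ⟨c, hc, rfl⟩ := mem_image.1 hb
    exact image_subset_image (h.2.1 c hc)
  · intro y hy
    obtain ⟨x, hx, rfl⟩ := mem_image.1 hy
    obtain ⟨b, ⟨hb, hxb⟩, -⟩ := h.2.2 x hx
    refine ⟨b.image f, ⟨mem_image_of_mem _ hb, mem_image_of_mem _ hxb⟩, ?_⟩
    rintro c ⟨hc, hxc⟩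
    obtain ⟨c, hcP, rfl⟩ := mem_image.1 hc
    obtain ⟨x', hx', e⟩ := mem_image.1 hxc
    have : x' = x := hf (h.2.1 c hcP hx') hx e
    subst this
    rw [h.uniq hb hcP hxb hx']

lemma tr_tr {X : Finset α} {d : ℕ} {P : Finset (Finset α)} (h : Part X d P)
    {f : α → β} {g : β → α} (hf : ∀ x ∈ X, g (f x) = x) : CDL.tr g (CDL.tr f P) = P := by
  unfold CDL.tr
  rw [image_image]
  conv_rhs => rw [← image_id (s := P)]
  apply image_congr
  intro b hb
  simp only [Function.comp, image_image, id]
  conv_rhs => rw [← image_id (s := b)]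
  apply image_congr
  intro x hx
  exact hf x (h.2.1 b hb hx)

lemma rel_tr {X : Finset α} {d : ℕ} {P : Finset (Finset α)} (h : Part X d P)
    {f : α → β} (hf : Set.InjOn f X) {x y : α} (hx : x ∈ X) (hy : y ∈ X) :
    Rel (CDL.tr f P) (f x) (f y) ↔ Rel P x y := by
  constructor
  · rintro ⟨b, hb, h1, h2⟩
    obtain ⟨c, hc, rfl⟩ := mem_image.1 hb
    obtain ⟨x', hx', e⟩ := mem_image.1 h1
    obtain ⟨y', hy', e'⟩ := mem_image.1 h2
    have := hf (h.2.1 c hc hx') hx e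
    have := hf (h.2.1 c hc hy') hy e'
    subst_vars
    exact ⟨c, hc, hx', hy'⟩
  · rintro ⟨b, hb, h1, h2⟩
    exact ⟨b.image f, mem_image_of_mem _ hb, mem_image_of_mem _ h1, mem_image_of_mem _ h2⟩

lemma Part.insert {X B : Finset α} {d : ℕ} {P : Finset (Finset α)} (h : Part X d P)
    (hB : B.card = d) (hd : Disjoint X B) : Part (X ∪ B) d (insert B P) := by
  refine ⟨?_, ?_, ?_⟩
  · intro b hb
    rcases mem_insert.1 hb with rfl | hb
    · exact hB
    · exact h.1 b hb
  · intro b hb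
    rcases mem_insert.1 hb with rfl | hb
    · exact subset_union_right
    · exact (h.2.1 b hb).trans subset_union_left
  · intro x hx
    rcases mem_union.1 hx with hxX | hxX
    · obtain ⟨b, ⟨hb, hxb⟩, -⟩ := h.2.2 x hxX
      refine ⟨b, ⟨mem_insert_of_mem hb, hxb⟩, ?_⟩
      rintro c ⟨hc, hxc⟩
      rcases mem_insert.1 hc with rfl | hc
      · exact absurd hxc (disjoint_left.1 hd hxX)
      · exact h.uniq hc hb hxc hxb
    · refine ⟨B, ⟨mem_insert_self _ _, hxX⟩, ?_⟩
      rintro c ⟨hc, hxc⟩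
      rcases mem_insert.1 hc with rfl | hc
      · rfl
      · exact absurd hxX (disjoint_left.1 hd (h.2.1 c hc hxc))

lemma Part.erase {X B : Finset α} {d : ℕ} {P : Finset (Finset α)} (h : Part X d P)
    (hB : B ∈ P) : Part (X \ B) d (P.erase B) := by
  refine ⟨fun b hb => h.1 b (mem_of_mem_erase hb), ?_, ?_⟩
  · intro b hb x hx
    refine mem_sdiff.2 ⟨h.2.1 b (mem_of_mem_erase hb) hx, fun hxB => ?_⟩
    exact (mem_erase.1 hb).1 (h.uniq (mem_of_mem_erase hb) hB hx hxB)
  · intro x hx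
    obtain ⟨hx, hxB⟩ := mem_sdiff.1 hx
    obtain ⟨b, ⟨hb, hxb⟩, -⟩ := h.2.2 x hx
    refine ⟨b, ⟨mem_erase.2 ⟨?_, hb⟩, hxb⟩, ?_⟩
    · rintro rfl; exact hxB hxb
    · rintro c ⟨hc, hxc⟩
      exact h.uniq (mem_of_mem_erase hc) hb hxc hxb

end

lemma lin_iff (N d : ℕ) (P : Finset (Finset ℕ)) : IsLinearDiagram N d P ↔ Part (Icc 1 N) d P :=
  Iff.rfl

lemma chord_iff (N d : ℕ) [NeZero N] (P : Finset (Finset (ZMod N))) :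
    IsChordDiagram N d P ↔ Part univ d P := by
  simp [IsChordDiagram, Part]

open Classical in
/-- loop set -/
noncomputable def loops (N : ℕ) (P : Finset (Finset ℕ)) : Finset ℕ :=
  (Icc 1 (N - 1)).filter (fun i => Rel P i (i + 1))

lemma mem_loops {N : ℕ} {P : Finset (Finset ℕ)} {i : ℕ} :
    i ∈ loops N P ↔ (1 ≤ i ∧ i ≤ N - 1) ∧ Rel P i (i + 1) := by
  simp only [loops, mem_filter, mem_Icc]

lemma loops_sub (N : ℕ) (P : Finset (Finset ℕ)) : loops N P ⊆ Icc 1 (N - 1) := fun _ hi =>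
  mem_Icc.2 (mem_loops.1 hi).1

lemma linLoops_eq (N : ℕ) (P : Finset (Finset ℕ)) : linLoops N P = (loops N P).card := by
  rw [linLoops, ← Set.ncard_coe_finset]
  congr 1
  ext i
  rw [mem_coe, mem_loops]
  constructor
  · rintro ⟨h1, h2, h3⟩; exact ⟨⟨h1, by omega⟩, h3⟩
  · rintro ⟨⟨h1, h2⟩, h3⟩; exact ⟨h1, by omega, h3⟩

lemma linLoops_zero (N : ℕ) (P : Finset (Finset ℕ)) :
    linLoops N P = 0 ↔ ∀ i, 1 ≤ i → i < N → ¬ Rel P i (i + 1) := by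
  rw [linLoops_eq, card_eq_zero, eq_empty_iff_forall_notMem]
  constructor
  · intro h i h1 h2 h3; exact h i (mem_loops.2 ⟨⟨h1, by omega⟩, h3⟩)
  · intro h i hi
    have hi := mem_loops.1 hi
    exact h i hi.1.1 (by omega) hi.2

open Classical in
/-- all diagrams -/
noncomputable def D (N d : ℕ) : Finset (Finset (Finset ℕ)) :=
  ((Icc 1 N).powerset.powerset).filter (fun P => Part (Icc 1 N) d P)

lemma mem_D {N d : ℕ} {P : Finset (Finset ℕ)} : P ∈ D N d ↔ Part (Icc 1 N) d P := by
  simp only [D, mem_filter, mem_powerset, and_iff_right_iff_imp]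
  intro h b hb
  exact mem_powerset.2 (h.2.1 b hb)

lemma numA_eq (d n k : ℕ) :
    numA d n k = ((D (n * d) d).filter (fun P => (loops (n * d) P).card = k)).card := by
  rw [numA, ← Set.ncard_coe_finset]
  congr 1
  ext P
  simp [mem_D, linLoops_eq, lin_iff]

/-! chord side -/

lemma numB_eq (d n : ℕ) (hd : 2 ≤ d) (hn : 2 ≤ n) :
    numB d n = Set.ncard {P : Finset (Finset ℕ) | Part (Icc 1 (n * d)) d P ∧
      linLoops (n * d) P = 0 ∧ ¬ Rel P 1 (n * d)} := by
  have hN : 4 ≤ n * d := Nat.mul_le_mul hn hd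
  generalize hNN : n * d = N at *
  rw [numB, hNN]
  haveI : NeZero N := ⟨by omega⟩
  let f : ZMod N → ℕ := fun x => x.val + 1
  let g : ℕ → ZMod N := fun i => (i : ZMod N) - 1
  have hgf : ∀ x, g (f x) = x := by intro x; simp [f, g]
  have hfi : Function.Injective f := Function.LeftInverse.injective hgf
  have hfu : (univ : Finset (ZMod N)).image f = Icc 1 N := by
    apply eq_of_subset_of_card_le
    · intro y hy
      obtain ⟨x, -, rfl⟩ := mem_image.1 hy
      have := ZMod.val_lt x
      simp only [f, mem_Icc]; omega
    · rw [card_image_of_injective _ hfi]; simp [ZMod.card]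
  have hfg : ∀ y ∈ Icc 1 N, f (g y) = y := by
    intro y hy
    rw [← hfu] at hy
    obtain ⟨x, -, rfl⟩ := mem_image.1 hy
    rw [hgf]
  have hgi : Set.InjOn g (Icc 1 N : Finset ℕ) := by
    intro x hx y hy h
    rw [← hfg x hx, ← hfg y hy, h]
  have hgu : (Icc 1 N).image g = univ := by
    rw [← hfu, image_image]
    have : g ∘ f = id := funext hgf
    rw [this, image_id]
  have key : ∀ P : Finset (Finset (ZMod N)), Part univ d P →
      (ChordLoopless N P ↔ linLoops N (tr f P) = 0 ∧ ¬ Rel (tr f P) 1 N) := by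
    intro P hP
    have hr : ∀ x y, Rel (tr f P) (f x) (f y) ↔ Rel P x y := fun x y =>
      rel_tr hP hfi.injOn (mem_univ _) (mem_univ _)
    have hsym : ∀ x y, Rel P x y → Rel P y x := fun x y ⟨b, h1, h2, h3⟩ => ⟨b, h1, h3, h2⟩
    have hg1 : ∀ y, g (y + 1) = g y + 1 := by intro y; simp [g]
    have hr' : ∀ x ∈ Icc 1 N, ∀ y ∈ Icc 1 N, (Rel (tr f P) x y ↔ Rel P (g x) (g y)) := by
      intro x hx y hy
      rw [← hr, hfg x hx, hfg y hy]
    have hN1 : g 1 = g N + 1 := by simp [g]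
    have m1 : 1 ∈ Icc 1 N := by rw [mem_Icc]; omega
    have mN : N ∈ Icc 1 N := by rw [mem_Icc]; omega
    rw [linLoops_zero, hr' 1 m1 N mN]
    constructor
    · intro h
      have h' : ∀ i, ¬ Rel P i (i + 1) := fun i ⟨b, h1, h2, h3⟩ => h i b h1 h2 h3
      refine ⟨fun i h1 h2 => ?_, fun hh => ?_⟩
      · rw [hr' i (by rw [mem_Icc]; omega) (i + 1) (by rw [mem_Icc]; omega), hg1]
        exact h' _
      · rw [hN1] at hh; exact h' _ (hsym _ _ hh)
    · rintro ⟨h1, h2⟩ i b hb hi hi'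
      have hR : Rel P i (i + 1) := ⟨b, hb, hi, hi'⟩
      have hm : f i ∈ Icc 1 N := by rw [← hfu]; exact mem_image_of_mem _ (mem_univ _)
      rw [← hgf i] at hR
      generalize f i = y at hR hm
      rw [mem_Icc] at hm
      rcases Nat.lt_or_ge y N with hy | hy
      · apply h1 y hm.1 hy
        rw [hr' y (by rw [mem_Icc]; omega) (y + 1) (by rw [mem_Icc]; omega), hg1]
        exact hR
      · have : y = N := by omega
        subst this
        rw [hN1] at h2
        exact h2 (hsym _ _ hR)
  have himg : {P : Finset (Finset ℕ) | Part (Icc 1 N) d P ∧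
      linLoops N P = 0 ∧ ¬ Rel P 1 N} = (tr f) '' {P | IsChordDiagram N d P ∧ ChordLoopless N P} := by
    ext P
    simp only [Set.mem_ofPred_eq, Set.mem_image]
    constructor
    · rintro ⟨hP, hh⟩
      have hQ : Part univ d (tr g P) := by rw [← hgu]; exact hP.tr hgi
      have hPP : tr f (tr g P) = P := tr_tr hP hfg
      refine ⟨tr g P, ⟨(chord_iff _ _ _).2 hQ, ?_⟩, hPP⟩
      rw [key _ hQ, hPP]; exact hh
    · rintro ⟨Q, ⟨hQ, hl⟩, rfl⟩
      rw [chord_iff] at hQ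
      refine ⟨?_, (key _ hQ).1 hl⟩
      rw [← hfu]; exact hQ.tr hfi.injOn
  rw [himg, Set.InjOn.ncard_image]
  intro P hP Q hQ h
  have hP := (chord_iff _ _ _).1 hP.1
  have hQ := (chord_iff _ _ _).1 hQ.1
  rw [← tr_tr hP (fun x _ => hgf x), ← tr_tr hQ (fun x _ => hgf x)]
  exact congrArg _ h

/-! insertion -/

/-- insertion map -/
def e (S : Finset ℕ) (j : ℕ) : ℕ := j + 1 + (S.filter (· < j)).card

/-- rank map -/
def r (B : Finset ℕ) (x : ℕ) : ℕ := (Icc 1 x \ B).card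

/-- inserted block -/
def Bl (N : ℕ) (S : Finset ℕ) : Finset ℕ := insert 1 (insert N (S.image (fun s => e S s + 1)))

/-- recovered set -/
def inner (N : ℕ) (B : Finset ℕ) : Finset ℕ := (B.erase 1).erase N

lemma e_succ (S : Finset ℕ) (j : ℕ) : e S (j + 1) = e S j + 1 + if j ∈ S then 1 else 0 := by
  unfold e
  split_ifs with h
  · have : S.filter (· < j + 1) = insert j (S.filter (· < j)) := by
      ext x; simp only [mem_filter, mem_insert]
      constructor
      · rintro ⟨h1, h2⟩
        by_cases hx : x = j
        · exact Or.inl hx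
        · exact Or.inr ⟨h1, by omega⟩
      · rintro (rfl | ⟨h1, h2⟩)
        · exact ⟨h, by omega⟩
        · exact ⟨h1, by omega⟩
    rw [this, card_insert_of_notMem (by simp)]; omega
  · have : S.filter (· < j + 1) = S.filter (· < j) := by
      ext x; simp only [mem_filter]
      constructor
      · rintro ⟨h1, h2⟩
        have hx : x ≠ j := by rintro rfl; exact h h1
        exact ⟨h1, by omega⟩
      · rintro ⟨h1, h2⟩
        exact ⟨h1, by omega⟩
    rw [this]; omega

lemma e_mono (S : Finset ℕ) : StrictMono (e S) :=
  strictMono_nat_of_lt_succ (fun j => by rw [e_succ]; omega)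

lemma e_one {S : Finset ℕ} {M : ℕ} (hS : S ⊆ Icc 1 (M - 1)) : e S 1 = 2 := by
  unfold e
  have : S.filter (· < 1) = ∅ := by
    rw [filter_eq_empty_iff]; intro x hx; have := mem_Icc.1 (hS hx); omega
  rw [this]; rfl

lemma e_M {S : Finset ℕ} {M : ℕ} (hM : 1 ≤ M) (hS : S ⊆ Icc 1 (M - 1)) :
    e S M = M + 1 + S.card := by
  unfold e
  rw [filter_true_of_mem]
  intro x hx; have := mem_Icc.1 (hS hx); omega

section fwd
variable {S : Finset ℕ} {M N d : ℕ} (hd : 2 ≤ d) (hM : 1 ≤ M) (hN : N = M + d)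
  (hS : S ⊆ Icc 1 (M - 1)) (hc : S.card = d - 2)
include hd hM hN hS hc

lemma e_range {j : ℕ} (h1 : 1 ≤ j) (h2 : j ≤ M) : 2 ≤ e S j ∧ e S j + 1 ≤ N := by
  have a := (e_mono S).monotone h1
  have b := (e_mono S).monotone h2
  rw [e_one hS] at a
  rw [e_M hM hS] at b
  omega

lemma s_range {s : ℕ} (h : s ∈ S) : 1 ≤ s ∧ s + 1 ≤ M ∧ 3 ≤ e S s + 1 ∧ e S s + 2 < N ∧
    e S (s + 1) = e S s + 2 := by
  have := mem_Icc.1 (hS h)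
  have h1 := e_range hd hM hN hS hc (j := s) (by omega) (by omega)
  have h2 := e_range hd hM hN hS hc (j := s + 1) (by omega) (by omega)
  have h3 := e_succ S s
  rw [if_pos h] at h3
  omega

lemma Bl_card : (Bl N S).card = d := by
  unfold Bl
  rw [card_insert_of_notMem, card_insert_of_notMem, card_image_of_injective, hc]
  · omega
  · intro a b h; exact (e_mono S).injective (by simpa using h)
  · intro h
    obtain ⟨s, hs, h⟩ := mem_image.1 h
    have := s_range hd hM hN hS hc hs
    omega
  · intro h
    rcases mem_insert.1 h with h | h
    · omega
    obtain ⟨s, hs, h⟩ := mem_image.1 h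
    have := s_range hd hM hN hS hc hs
    omega

lemma e_notMem {j : ℕ} (h1 : 1 ≤ j) (h2 : j ≤ M) : e S j ∉ Bl N S := by
  intro h
  have hr := e_range hd hM hN hS hc h1 h2
  rcases mem_insert.1 h with h | h
  · omega
  rcases mem_insert.1 h with h | h
  · omega
  obtain ⟨s, hs, h⟩ := mem_image.1 h
  have := s_range hd hM hN hS hc hs
  have a : s < j := (e_mono S).lt_iff_lt.1 (by omega)
  have b : j < s + 1 := (e_mono S).lt_iff_lt.1 (by omega)
  omega

lemma e_disj : Disjoint ((Icc 1 M).image (e S)) (Bl N S) := by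
  rw [disjoint_left]
  intro y hy
  obtain ⟨j, hj, rfl⟩ := mem_image.1 hy
  rw [mem_Icc] at hj
  exact e_notMem hd hM hN hS hc hj.1 hj.2

lemma e_union : (Icc 1 M).image (e S) ∪ Bl N S = Icc 1 N := by
  apply eq_of_subset_of_card_le
  · intro y hy
    rw [mem_Icc]
    rcases mem_union.1 hy with h | h
    · obtain ⟨j, hj, rfl⟩ := mem_image.1 h
      rw [mem_Icc] at hj
      have := e_range hd hM hN hS hc hj.1 hj.2
      omega
    · rcases mem_insert.1 h with h | h
      · omega
      rcases mem_insert.1 h with h | h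
      · omega
      obtain ⟨s, hs, h⟩ := mem_image.1 h
      have := s_range hd hM hN hS hc hs
      omega
  · rw [card_union_of_disjoint (e_disj hd hM hN hS hc), Bl_card hd hM hN hS hc,
      card_image_of_injective _ (e_mono S).injective]
    simp; omega

lemma r_e {j : ℕ} (h1 : 1 ≤ j) (h2 : j ≤ M) : r (Bl N S) (e S j) = j := by
  have : Icc 1 (e S j) \ Bl N S = (Icc 1 j).image (e S) := by
    ext y
    rw [mem_sdiff, mem_image]
    constructor
    · rintro ⟨hy, hyB⟩
      rw [mem_Icc] at hy
      have hr := e_range hd hM hN hS hc h1 h2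
      have : y ∈ Icc 1 N := by rw [mem_Icc]; omega
      rw [← e_union hd hM hN hS hc] at this
      rcases mem_union.1 this with h | h
      · obtain ⟨i, hi, rfl⟩ := mem_image.1 h
        rw [mem_Icc] at hi
        exact ⟨i, mem_Icc.2 ⟨hi.1, (e_mono S).le_iff_le.1 hy.2⟩, rfl⟩
      · exact absurd h hyB
    · rintro ⟨i, hi, rfl⟩
      rw [mem_Icc] at hi
      have hr := e_range hd hM hN hS hc hi.1 (by omega)
      exact ⟨mem_Icc.2 ⟨by omega, (e_mono S).monotone hi.2⟩,
        e_notMem hd hM hN hS hc hi.1 (by omega)⟩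
  rw [r, this, card_image_of_injective _ (e_mono S).injective]; simp

end fwd

lemma r_step {B : Finset ℕ} {x : ℕ} (h : x + 1 ∈ B) : r B (x + 1) = r B x := by
  unfold r
  congr 1
  ext y
  simp only [mem_sdiff, mem_Icc]
  constructor
  · rintro ⟨h1, h2⟩
    have : y ≠ x + 1 := by rintro rfl; exact h2 h
    exact ⟨by omega, h2⟩
  · rintro ⟨h1, h2⟩; exact ⟨by omega, h2⟩

lemma r_mono (B : Finset ℕ) : Monotone (r B) := fun x y h =>
  card_le_card (sdiff_subset_sdiff (Icc_subset_Icc_right h) subset_rfl)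

lemma r_lt {B : Finset ℕ} {x y : ℕ} (h : x < y) (hy : y ∉ B) : r B x < r B y := by
  apply card_lt_card
  rw [ssubset_iff_of_subset (sdiff_subset_sdiff (Icc_subset_Icc_right h.le) subset_rfl)]
  exact ⟨y, mem_sdiff.2 ⟨mem_Icc.2 ⟨by omega, le_rfl⟩, hy⟩, fun hh => by
    have := mem_Icc.1 (mem_sdiff.1 hh).1; omega⟩

section fwd2
variable {S : Finset ℕ} {M N d : ℕ} (hd : 2 ≤ d) (hM : 1 ≤ M) (hN : N = M + d)
  (hS : S ⊆ Icc 1 (M - 1)) (hc : S.card = d - 2)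
include hd hM hN hS hc

lemma r_inner : (inner N (Bl N S)).image (r (Bl N S)) = S := by
  have h1 : inner N (Bl N S) = S.image (fun s => e S s + 1) := by
    ext y
    simp only [inner, Bl, mem_erase, mem_insert]
    constructor
    · tauto
    · intro h
      refine ⟨?_, ?_, Or.inr (Or.inr h)⟩ <;>
      · obtain ⟨s, hs, h⟩ := mem_image.1 h
        have := s_range hd hM hN hS hc hs
        omega
  rw [h1, image_image]
  conv_rhs => rw [← image_id (s := S)]
  apply image_congr
  intro s hs
  have h2 := s_range hd hM hN hS hc hs
  simp only [Function.comp, id]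
  rw [r_step, r_e hd hM hN hS hc (by omega) (by omega)]
  exact mem_insert_of_mem (mem_insert_of_mem (mem_image_of_mem _ hs))

lemma F_mem {Q : Finset (Finset ℕ)} (hQ : Part (Icc 1 M) d Q) (hl : loops M Q ⊆ S) :
    Part (Icc 1 N) d (insert (Bl N S) (tr (e S) Q)) ∧
    linLoops N (insert (Bl N S) (tr (e S) Q)) = 0 ∧
    Rel (insert (Bl N S) (tr (e S) Q)) 1 N := by
  have hei : Set.InjOn (e S) (Icc 1 M : Finset ℕ) := (e_mono S).injective.injOn
  refine ⟨?_, ?_, ?_⟩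
  · rw [← e_union hd hM hN hS hc]
    exact (hQ.tr hei).insert (Bl_card hd hM hN hS hc) (e_disj hd hM hN hS hc)
  · rw [linLoops_zero]
    rintro i h1 h2 ⟨b, hb, hi, hi'⟩
    rcases mem_insert.1 hb with rfl | hb
    · rcases mem_insert.1 hi with h | h
      · subst h
        apply e_notMem hd hM hN hS hc le_rfl hM
        rw [e_one hS]; exact hi'
      rcases mem_insert.1 h with h | h
      · omega
      obtain ⟨s, hs, h⟩ := mem_image.1 h
      have := s_range hd hM hN hS hc hs
      apply e_notMem hd hM hN hS hc (j := s + 1) (by omega) (by omega)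
      rw [this.2.2.2.2]; rw [← h] at hi'; exact hi'
    · obtain ⟨c, hcQ, rfl⟩ := mem_image.1 hb
      obtain ⟨x, hx, h3⟩ := mem_image.1 hi
      obtain ⟨y, hy, h4⟩ := mem_image.1 hi'
      have hxI := mem_Icc.1 (hQ.2.1 c hcQ hx)
      have hyI := mem_Icc.1 (hQ.2.1 c hcQ hy)
      have a : x < y := (e_mono S).lt_iff_lt.1 (by omega)
      have b := (e_mono S).monotone (show x + 1 ≤ y from a)
      have hsx := e_succ S x
      have hxy : y = x + 1 := (e_mono S).injective (by split_ifs at hsx <;> omega)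
      subst hxy
      have hxS : x ∈ S := hl (by
        simp only [loops, mem_filter, mem_Icc]
        exact ⟨by omega, c, hcQ, hx, hy⟩)
      rw [if_pos hxS] at hsx
      omega
  · exact ⟨_, mem_insert_self _ _, mem_insert_self _ _, mem_insert_of_mem (mem_insert_self _ _)⟩

lemma Bl_notMem {Q : Finset (Finset ℕ)} (hQ : Part (Icc 1 M) d Q) : Bl N S ∉ tr (e S) Q := by
  intro h
  have h1 : (1 : ℕ) ∈ Bl N S := mem_insert_self _ _
  have := (hQ.tr (e_mono S).injective.injOn).2.1 _ h h1
  exact disjoint_left.1 (e_disj hd hM hN hS hc) this h1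

end fwd2

lemma F_inj {S S' : Finset ℕ} {M N d : ℕ} (hd : 2 ≤ d) (hM : 1 ≤ M) (hN : N = M + d)
    (hS : S ⊆ Icc 1 (M - 1)) (hc : S.card = d - 2)
    (hS' : S' ⊆ Icc 1 (M - 1)) (hc' : S'.card = d - 2) {Q Q' : Finset (Finset ℕ)}
    (hQ : Part (Icc 1 M) d Q) (hl : loops M Q ⊆ S)
    (hQ' : Part (Icc 1 M) d Q')
    (h : insert (Bl N S) (tr (e S) Q) = insert (Bl N S') (tr (e S') Q')) : Q = Q' ∧ S = S' := by
  have hP := (F_mem hd hM hN hS hc hQ hl).1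
  have hB : Bl N S = Bl N S' := by
    apply hP.uniq (x := 1) (mem_insert_self _ _) _ (mem_insert_self _ _) (mem_insert_self _ _)
    rw [h]; exact mem_insert_self _ _
  have hSS : S = S' := by
    rw [← r_inner hd hM hN hS hc, hB, r_inner hd hM hN hS' hc']
  subst hSS
  refine ⟨?_, rfl⟩
  have h2 := congrArg (fun P => P.erase (Bl N S)) h
  simp only [erase_insert (Bl_notMem hd hM hN hS hc hQ),
    erase_insert (Bl_notMem hd hM hN hS hc hQ')] at h2
  have hre : ∀ x ∈ Icc 1 M, r (Bl N S) (e S x) = x := fun x hx =>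
    r_e hd hM hN hS hc (mem_Icc.1 hx).1 (mem_Icc.1 hx).2
  rw [← tr_tr hQ hre, h2, tr_tr hQ' hre]

lemma F_surj {M N d : ℕ} (hd : 2 ≤ d) (hM : 1 ≤ M) (hN : N = M + d) {P : Finset (Finset ℕ)}
    (hP : Part (Icc 1 N) d P) (hl : linLoops N P = 0) (hR : Rel P 1 N) :
    ∃ Q S, S ⊆ Icc 1 (M - 1) ∧ S.card = d - 2 ∧ Part (Icc 1 M) d Q ∧ loops M Q ⊆ S ∧
      insert (Bl N S) (tr (e S) Q) = P := by
  obtain ⟨B, hB, h1B, hNB⟩ := hR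
  rw [linLoops_zero] at hl
  have hBI : ∀ x ∈ B, 1 ≤ x ∧ x ≤ N := fun x hx => mem_Icc.1 (hP.2.1 B hB hx)
  have hcons : ∀ x, x ∈ B → x + 1 ∉ B := by
    intro x hx hx'
    have a := hBI _ hx
    have b := hBI _ hx'
    exact hl x a.1 (by omega) ⟨B, hB, hx, hx'⟩
  have hBc : B.card = d := hP.1 B hB
  have hI : ∀ b ∈ inner N B, b ∈ B ∧ 3 ≤ b ∧ b + 2 ≤ N := by
    intro b hb
    simp only [inner, mem_erase] at hb
    have a := hBI _ hb.2.2
    have h2 : b ≠ 2 := by rintro rfl; exact hcons 1 h1B hb.2.2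
    have h3 : b + 1 ≠ N := by rintro rfl; exact hcons b hb.2.2 hNB
    exact ⟨hb.2.2, by omega, by omega⟩
  have h2B : 2 ∉ B := hcons 1 h1B
  have hN1B : N - 1 ∉ B := by
    intro h; apply hcons _ h; rw [Nat.sub_add_cancel (by omega)]; exact hNB
  have hIc : (inner N B).card = d - 2 := by
    rw [inner, card_erase_of_mem (mem_erase.2 ⟨by omega, hNB⟩), card_erase_of_mem h1B, hBc]; omega
  have hrI : Set.InjOn (r B) (inner N B) := by
    have key : ∀ b ∈ inner N B, ∀ b' ∈ inner N B, b < b' → r B b < r B b' := by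
      intro b hb b' hb' h
      exact (r_lt (Nat.lt_succ_self b) (hcons b (hI b hb).1)).trans_le (r_mono B h)
    intro b hb b' hb' h
    rcases lt_trichotomy b b' with h' | h' | h'
    · have := key b hb b' hb' h'; omega
    · exact h'
    · have := key b' hb' b hb h'; omega
  have hrN : r B N = M := by
    rw [r, card_sdiff_of_subset (hP.2.1 B hB), hBc]; simp; omega
  obtain ⟨S, hSdef⟩ : ∃ S, S = (inner N B).image (r B) := ⟨_, rfl⟩
  have hSc : S.card = d - 2 := by rw [hSdef, card_image_of_injOn hrI, hIc]
  have hr0 : r B 0 = 0 := by simp [r]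
  have hSS : S ⊆ Icc 1 (M - 1) := by
    intro s hs
    rw [hSdef] at hs
    obtain ⟨b, hb, rfl⟩ := mem_image.1 hs
    have hb := hI b hb
    have x1 := r_lt (show 0 < 2 by omega) h2B
    have x2 := r_mono B (show 2 ≤ b by omega)
    have x3 := r_lt (show b < N - 1 by omega) hN1B
    have x4 := r_mono B (show N - 1 ≤ N by omega)
    rw [mem_Icc]; omega
  have her : ∀ x ∈ Icc 1 N \ B, e S (r B x) = x := by
    intro x hx
    obtain ⟨hx, hxB⟩ := mem_sdiff.1 hx
    rw [mem_Icc] at hx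
    have hx1 : x ≠ 1 := by rintro rfl; exact hxB h1B
    have hxN : x ≠ N := by rintro rfl; exact hxB hNB
    have c1 : (S.filter (· < r B x)).card = ((inner N B).filter (· < x)).card := by
      rw [hSdef, filter_image, card_image_of_injOn (hrI.mono (by
        intro y hy; exact (mem_filter.1 hy).1))]
      congr 1
      apply filter_congr
      intro b hb
      constructor
      · intro h; by_contra h'; have := r_mono B (not_lt.1 h'); omega
      · intro h; exact r_lt h hxB
    have c2 : Icc 1 x ∩ B = insert 1 ((inner N B).filter (· < x)) := by
      ext y
      simp only [mem_inter, mem_Icc, mem_insert, mem_filter, inner, mem_erase]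
      constructor
      · rintro ⟨⟨h1, h2⟩, h3⟩
        by_cases hy : y = 1
        · exact Or.inl hy
        · have : y ≠ x := by rintro rfl; exact hxB h3
          exact Or.inr ⟨⟨by omega, hy, h3⟩, by omega⟩
      · rintro (rfl | ⟨⟨h1, h2, h3⟩, h4⟩)
        · exact ⟨by omega, h1B⟩
        · exact ⟨⟨(hBI y h3).1, h4.le⟩, h3⟩
    have c3 := card_sdiff_add_card_inter (Icc 1 x) B
    rw [c2, card_insert_of_notMem (by simp [inner])] at c3
    simp only [Nat.card_Icc] at c3
    unfold e
    rw [c1]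
    unfold r
    omega
  have hBl : Bl N S = B := by
    have c4 : S.image (fun s => e S s + 1) = inner N B := by
      conv_lhs => rw [hSdef]
      rw [image_image]
      conv_rhs => rw [← image_id (s := inner N B)]
      rw [← hSdef]
      apply image_congr
      intro b hb
      have hb := hI b hb
      obtain ⟨c, rfl⟩ : ∃ c, b = c + 1 := ⟨b - 1, by omega⟩
      simp only [Function.comp, id]
      rw [r_step hb.1, her]
      rw [mem_sdiff, mem_Icc]
      exact ⟨by omega, fun h => hcons c h hb.1⟩
    rw [Bl, c4, inner, insert_erase (mem_erase.2 ⟨by omega, hNB⟩), insert_erase h1B]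
  have hPe := hP.erase hB
  have hinj : Set.InjOn (r B) (Icc 1 N \ B : Finset ℕ) := by
    intro x hx y hy h
    rw [← her x hx, ← her y hy, h]
  have hrim : (Icc 1 N \ B).image (r B) = Icc 1 M := by
    apply eq_of_subset_of_card_le
    · intro y hy
      obtain ⟨x, hx, rfl⟩ := mem_image.1 hy
      obtain ⟨hx, hxB⟩ := mem_sdiff.1 hx
      rw [mem_Icc] at hx
      have x1 := r_lt (show 0 < x by omega) hxB
      have x2 := r_mono B hx.2
      rw [mem_Icc]; omega
    · rw [card_image_of_injOn hinj, card_sdiff_of_subset (hP.2.1 B hB), hBc]; simp; omega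
  have hQ : Part (Icc 1 M) d (tr (r B) (P.erase B)) := by rw [← hrim]; exact hPe.tr hinj
  have htt : tr (e S) (tr (r B) (P.erase B)) = P.erase B := tr_tr hPe her
  refine ⟨tr (r B) (P.erase B), S, hSS, hSc, hQ, ?_, ?_⟩
  · intro j hj
    simp only [loops, mem_filter, mem_Icc] at hj
    obtain ⟨⟨hj1, hj2⟩, c, hcQ, hx, hy⟩ := hj
    by_contra hjS
    have hs := e_succ S j
    rw [if_neg hjS] at hs
    have ra := e_range hd hM hN hSS hSc hj1 (show j ≤ M by omega)
    apply hl (e S j) (by omega) (by omega)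
    have : c.image (e S) ∈ P.erase B := by rw [← htt]; exact mem_image_of_mem _ hcQ
    refine ⟨_, mem_of_mem_erase this, mem_image_of_mem _ hx, ?_⟩
    rw [show e S j + 1 = e S (j + 1) by omega]
    exact mem_image_of_mem _ hy
  · rw [htt, hBl, insert_erase hB]

lemma card_super (X K : Finset ℕ) (hK : K ⊆ X) (m : ℕ) (hm : K.card ≤ m) :
    ((X.powersetCard m).filter (fun S => K ⊆ S)).card = (X.card - K.card).choose (m - K.card) := by
  rw [← card_sdiff_of_subset hK, ← card_powersetCard]
  apply card_bij' (fun S _ => S \ K) (fun S _ => S ∪ K)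
  · intro S hS
    simp only [mem_filter, mem_powersetCard] at hS ⊢
    refine ⟨sdiff_subset_sdiff hS.1.1 subset_rfl, ?_⟩
    rw [card_sdiff_of_subset hS.2, hS.1.2]
  · intro S hS
    simp only [mem_filter, mem_powersetCard] at hS ⊢
    have hdis : Disjoint S K := (subset_sdiff.1 hS.1).2
    refine ⟨⟨union_subset (hS.1.trans sdiff_subset) hK, ?_⟩, subset_union_right⟩
    rw [card_union_of_disjoint hdis]; omega
  · intro S hS
    simp only [mem_filter, mem_powersetCard] at hS
    exact sdiff_union_of_subset hS.2
  · intro S hS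
    simp only [mem_powersetCard] at hS
    have hdis : Disjoint S K := (subset_sdiff.1 hS.1).2
    rw [union_sdiff_right]; exact sdiff_eq_self_of_disjoint hdis

lemma count {M N d : ℕ} (hd : 2 ≤ d) (hM : 1 ≤ M) (hN : N = M + d) :
    Set.ncard {P : Finset (Finset ℕ) | Part (Icc 1 N) d P ∧ linLoops N P = 0 ∧ Rel P 1 N} =
    ∑ k ∈ range (d - 1), (M - k - 1).choose (d - 2 - k) *
      ((D M d).filter (fun P => (loops M P).card = k)).card := by
  let T : Finset ((_ : Finset (Finset ℕ)) × Finset ℕ) := (D M d).sigma (fun Q =>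
    ((Icc 1 (M - 1)).powersetCard (d - 2)).filter (fun S => loops M Q ⊆ S))
  have hT : ∀ p, p ∈ T ↔ Part (Icc 1 M) d p.1 ∧ p.2 ⊆ Icc 1 (M - 1) ∧ p.2.card = d - 2 ∧
      loops M p.1 ⊆ p.2 := by
    intro p; simp only [T, mem_sigma, mem_filter, mem_powersetCard, mem_D]; tauto
  have h1 : {P : Finset (Finset ℕ) | Part (Icc 1 N) d P ∧ linLoops N P = 0 ∧ Rel P 1 N} =
      (fun p : ((_ : Finset (Finset ℕ)) × Finset ℕ) =>
        insert (Bl N p.2) (tr (e p.2) p.1)) '' (T : Set _) := by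
    ext P
    simp only [Set.mem_ofPred_eq, Set.mem_image, mem_coe]
    constructor
    · rintro ⟨a, b, c⟩
      obtain ⟨Q, S, h1, h2, h3, h4, h5⟩ := F_surj hd hM hN a b c
      exact ⟨⟨Q, S⟩, (hT _).2 ⟨h3, h1, h2, h4⟩, h5⟩
    · rintro ⟨p, hp, rfl⟩
      obtain ⟨h1, h2, h3, h4⟩ := (hT _).1 hp
      exact F_mem hd hM hN h2 h3 h1 h4
  rw [h1, Set.InjOn.ncard_image, Set.ncard_coe_finset, card_sigma]
  · have h2 : ∀ Q ∈ D M d, (((Icc 1 (M - 1)).powersetCard (d - 2)).filter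
        (fun S => loops M Q ⊆ S)).card = ∑ k ∈ range (d - 1),
          if (loops M Q).card = k then (M - k - 1).choose (d - 2 - k) else 0 := by
      intro Q hQ
      rw [sum_ite_eq]
      split_ifs with h
      · rw [mem_range] at h
        rw [card_super _ (loops M Q) (loops_sub _ _) _ (by omega)]
        congr 1
        simp only [Nat.card_Icc]; omega
      · rw [mem_range] at h
        rw [card_eq_zero, filter_eq_empty_iff]
        intro S hS hh
        have := card_le_card hh
        rw [(mem_powersetCard.1 hS).2] at this
        omega
    rw [sum_congr rfl h2, sum_comm]
    apply sum_congr rfl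
    intro k _
    rw [← sum_filter, sum_const, smul_eq_mul, mul_comm]
  · rintro ⟨Q, S⟩ hp ⟨Q', S'⟩ hp' h
    obtain ⟨h1, h2, h3, h4⟩ := (hT _).1 hp
    obtain ⟨h1', h2', h3', h4'⟩ := (hT _).1 hp'
    obtain ⟨rfl, rfl⟩ := F_inj hd hM hN h2 h3 h2' h3' h1 h4 h1' h
    rfl

end CDL

/-- for `d ≥ 2` and `n ≥ 2`,
`b(n) = a(n,0) − Σ_{k=0}^{d−2} C(d(n−1)−k−1, d−2−k) · a(n−1,k)`. -/
theorem chord_eq_linear_sub (d : ℕ) (hd : 2 ≤ d) (n : ℕ) (hn : 2 ≤ n) :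
    (numB d n : ℤ) =
      (numA d n 0 : ℤ) -
        ∑ k ∈ Finset.range (d - 1),
          ((d * (n - 1) - k - 1).choose (d - 2 - k) * numA d (n - 1) k : ℤ) := by
  have hN : n * d = (n - 1) * d + d := by
    obtain ⟨m, rfl⟩ : ∃ m, n = m + 1 := ⟨n - 1, by omega⟩
    simp [Nat.add_mul]
  have hM : 1 ≤ (n - 1) * d := Nat.mul_pos (by omega) (by omega)
  have h := CDL.count hd hM hN
  have hA : numA d n 0 = numB d n + Set.ncard {P : Finset (Finset ℕ) |
      CDL.Part (Finset.Icc 1 (n * d)) d P ∧ linLoops (n * d) P = 0 ∧ CDL.Rel P 1 (n * d)} := by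
    rw [CDL.numB_eq d n hd hn, numA, ← Set.ncard_union_eq ?_ ?_ ?_]
    · congr 1
      ext P
      simp only [Set.mem_ofPred_eq, Set.mem_union, CDL.lin_iff]
      tauto
    · rw [Set.disjoint_left]
      rintro P ⟨_, _, a⟩ ⟨_, _, b⟩
      exact a b
    · exact (CDL.D (n * d) d).finite_toSet.subset (fun P hP => CDL.mem_D.2 hP.1)
    · exact (CDL.D (n * d) d).finite_toSet.subset (fun P hP => CDL.mem_D.2 hP.1)
  rw [h] at hA
  rw [hA]
  simp only [CDL.numA_eq]
  rw [mul_comm (n - 1) d]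
  push_cast
  ring
end

section
/- Fix an integer d ≥ 2. For every integer n ≥ 1 and every k with 0 ≤ k ≤ n(d−1), a(n,k) = Σ_{t=k−d+1}^{k+d−1} c(n,k,t) · a(n−1,t), where c(n,k,t) = Σ_{i=0}^{d−1} C(d−1, i) · C(t, t+i−k) · C(d(n−1)−t, d−2i−t+k−1). -/
open Finset
def sg (m : ℕ → ℕ) (j : ℕ) : ℕ := j + ∑ g ∈ range j, m g

lemma sg_zero (m) : sg m 0 = 0 := by simp [sg]
lemma sg_succ (m j) : sg m (j+1) = sg m j + m j + 1 := by simp [sg, sum_range_succ]; ring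
lemma sg_mono (m) : StrictMono (sg m) := strictMono_nat_of_lt_succ (fun j => by rw [sg_succ]; omega)

def MS (M d : ℕ) : Finset (ℕ → ℕ) := (piAntidiag (range (M+1)) d).filter (fun m => m 0 ≠ 0)

open Classical in
noncomputable def bl (N : ℕ) (m : ℕ → ℕ) : Finset ℕ := (Icc 1 N).filter (fun x => ∀ j, sg m j ≠ x)

lemma sg_tail {M d m} (h : m ∈ MS M d) (j) : sg m (M + 1 + j) = M + 1 + j + d := by
  simp only [MS, mem_filter, mem_piAntidiag] at h
  have : ∑ g ∈ range (M+1), m g = ∑ g ∈ range (M+1+j), m g := by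
    apply sum_subset
    · intro x; simp; omega
    · intro x _ hx; by_contra hc; exact hx (h.1.2 x hc)
  simp [sg, ← this, h.1.1]

lemma sg_le_iff {M d m} (h : m ∈ MS M d) (j) : sg m j ≤ M + d ↔ j ≤ M := by
  have := sg_tail h 0
  have h2 := (sg_mono m).lt_iff_lt (a := j) (b := M + 1 + 0)
  omega

lemma sg_pos_iff (m) (j) : 1 ≤ sg m j ↔ 1 ≤ j := by
  have h2 := (sg_mono m).lt_iff_lt (a := 0) (b := j)
  rw [sg_zero] at h2
  omega

lemma mem_bl {M d m} (h : m ∈ MS M d) (x) : x ∈ bl (M+d) m ↔ ∀ j, sg m j ≠ x := by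
  simp only [bl, mem_filter, mem_Icc, and_iff_right_iff_imp]
  intro hx
  constructor
  · by_contra hc
    exact hx 0 (by rw [sg_zero]; omega)
  · by_contra hc
    apply hx (M + 1 + (x - d - M - 1))
    rw [sg_tail h]; omega

lemma card_bl {M d m} (h : m ∈ MS M d) : (bl (M+d) m).card = d := by
  classical
  have e : Icc 1 (M+d) = bl (M+d) m ∪ (Icc 1 M).image (sg m) := by
    ext x
    simp only [mem_union, mem_image]
    constructor
    · intro hx
      by_cases hb : x ∈ bl (M+d) m
      · exact Or.inl hb
      · rw [mem_bl h] at hb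
        push Not at hb
        obtain ⟨j, rfl⟩ := hb
        right
        rw [mem_Icc, sg_pos_iff, sg_le_iff h] at hx
        exact ⟨j, mem_Icc.2 hx, rfl⟩
    · rintro (hx | ⟨j, hj, rfl⟩)
      · exact (mem_filter.1 hx).1
      · rw [mem_Icc, sg_pos_iff, sg_le_iff h]; exact mem_Icc.1 hj
  have dj : Disjoint (bl (M+d) m) ((Icc 1 M).image (sg m)) := by
    rw [disjoint_left]
    intro x hx hx2
    obtain ⟨j, _, hj⟩ := mem_image.1 hx2
    exact (mem_bl h x).1 hx j hj
  have := congrArg card e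
  rw [card_union_of_disjoint dj, card_image_of_injective _ (sg_mono m).injective] at this
  simp at this
  omega

lemma one_mem_bl {M d m} (h : m ∈ MS M d) : 1 ∈ bl (M+d) m := by
  rw [mem_bl h]
  intro j hj
  have h0 : m 0 ≠ 0 := (mem_filter.1 h).2
  have h1 := sg_succ m 0
  rw [sg_zero] at h1
  have : 1 ≤ j := by rw [← sg_pos_iff m]; omega
  have := (sg_mono m).monotone this
  simp only [zero_add] at h1
  omega

def Sm (M : ℕ) (m : ℕ → ℕ) : Finset ℕ := (Icc 1 M).filter (fun g => m g ≠ 0)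

lemma gap_not (m) (g x) (h1 : sg m g < x) (h2 : x < sg m (g+1)) (j) : sg m j ≠ x := by
  rintro rfl
  rw [(sg_mono m).lt_iff_lt] at h1 h2
  omega

lemma loops_bl {M d m} (h : m ∈ MS M d) :
    ((bl (M+d) m).filter (fun i => i + 1 ∈ bl (M+d) m)).card + (Sm M m).card + 1 = d := by
  classical
  have h0 : m 0 ≠ 0 := (mem_filter.1 h).2
  have hsup : ∀ g, m g ≠ 0 → g < M + 1 := fun g hg =>
    mem_range.1 ((mem_piAntidiag.1 (mem_filter.1 h).1).2 g hg)
  have e : (bl (M+d) m).filter (fun i => ¬ (i + 1 ∈ bl (M+d) m)) =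
      (insert 0 (Sm M m)).image (fun g => sg m (g+1) - 1) := by
    ext x
    simp only [mem_filter, mem_image, mem_bl h, mem_insert, Sm, mem_Icc]
    constructor
    · rintro ⟨hx, hx2⟩
      push Not at hx2
      obtain ⟨j, hj⟩ := hx2
      obtain ⟨g, rfl⟩ : ∃ g, j = g + 1 := by
        rcases j with _ | g
        · rw [sg_zero] at hj; omega
        · exact ⟨g, rfl⟩
      have hg : m g ≠ 0 := by
        intro hc
        have := sg_succ m g
        exact hx g (by omega)
      refine ⟨g, ?_, by omega⟩
      have := hsup g hg
      by_cases hg0 : g = 0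
      · left; exact hg0
      · right; exact ⟨by omega, hg⟩
    · rintro ⟨g, hg, rfl⟩
      have hm : m g ≠ 0 := by
        rcases hg with rfl | hg
        · exact h0
        · exact hg.2
      have := sg_succ m g
      refine ⟨gap_not m g _ (by omega) (by omega), ?_⟩
      push Not
      exact ⟨g+1, by omega⟩
  have c := card_filter_add_card_filter_not (s := bl (M+d) m) (fun i => i + 1 ∈ bl (M+d) m)
  rw [e, card_bl h, card_image_of_injOn, card_insert_of_notMem] at c
  · omega
  · simp [Sm]
  · intro a _ b _ hab
    simp only at hab
    have h1 := sg_succ m a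
    have h2 := sg_succ m b
    have := (sg_mono m).injective (a₁ := a+1) (a₂ := b+1) (by omega)
    omega

open Classical in
noncomputable def Ph (N : ℕ) (m : ℕ → ℕ) (P : Finset (Finset ℕ)) : Finset (Finset ℕ) :=
  insert (bl N m) (P.image (fun b => b.image (sg m)))

lemma Ph_diag {M d m P} (h : m ∈ MS M d) (hP : IsLinearDiagram M d P) :
    IsLinearDiagram (M+d) d (Ph (M+d) m P) := by
  classical
  obtain ⟨p1, p2, p3⟩ := hP
  refine ⟨?_, ?_, ?_⟩
  · intro b hb
    simp only [Ph, mem_insert, mem_image] at hb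
    rcases hb with rfl | ⟨c, hc, rfl⟩
    · exact card_bl h
    · rw [card_image_of_injective _ (sg_mono m).injective, p1 c hc]
  · intro b hb x hx
    simp only [Ph, mem_insert, mem_image] at hb
    rcases hb with rfl | ⟨c, hc, rfl⟩
    · exact (mem_filter.1 hx).1
    · obtain ⟨j, hj, rfl⟩ := mem_image.1 hx
      rw [mem_Icc, sg_pos_iff, sg_le_iff h]; exact mem_Icc.1 (p2 c hc j hj)
  · intro x hx
    by_cases hb : x ∈ bl (M+d) m
    · refine ⟨_, ⟨mem_insert_self _ _, hb⟩, ?_⟩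
      rintro b ⟨hb1, hb2⟩
      simp only [Ph, mem_insert, mem_image] at hb1
      rcases hb1 with rfl | ⟨c, hc, rfl⟩
      · rfl
      · obtain ⟨j, hj, rfl⟩ := mem_image.1 hb2
        exact absurd rfl ((mem_bl h _).1 hb j)
    · have hb' := hb
      rw [mem_bl h] at hb
      push Not at hb
      obtain ⟨j, rfl⟩ := hb
      rw [mem_Icc, sg_pos_iff, sg_le_iff h, ← mem_Icc] at hx
      obtain ⟨c, ⟨hc1, hc2⟩, hc3⟩ := p3 j hx
      refine ⟨c.image (sg m), ⟨mem_insert_of_mem (mem_image_of_mem _ hc1), mem_image_of_mem _ hc2⟩, ?_⟩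
      rintro b ⟨hb1, hb2⟩
      simp only [Ph, mem_insert, mem_image] at hb1
      rcases hb1 with rfl | ⟨c', hc', rfl⟩
      · exact absurd hb2 hb'
      · obtain ⟨j', hj', e⟩ := mem_image.1 hb2
        obtain rfl := (sg_mono m).injective e
        rw [hc3 c' ⟨hc', hj'⟩]

open Classical in
noncomputable def lpF (M : ℕ) (P : Finset (Finset ℕ)) : Finset ℕ :=
  (Icc 1 M).filter (fun i => ∃ b ∈ P, i ∈ b ∧ i + 1 ∈ b)

lemma linLoops_eq {M d P} (hP : IsLinearDiagram M d P) : linLoops M P = (lpF M P).card := by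
  rw [linLoops, ← Set.ncard_coe_finset]
  congr 1
  ext i
  simp only [Set.mem_ofPred_eq, lpF, coe_filter, mem_Icc]
  constructor
  · rintro ⟨a, b, c⟩; exact ⟨⟨a, by omega⟩, c⟩
  · rintro ⟨⟨a, b⟩, c, hc, h1, h2⟩
    exact ⟨a, (mem_Icc.1 (hP.2.1 c hc _ h2)).2, c, hc, h1, h2⟩

lemma Ph_lp {M d m P} (h : m ∈ MS M d) (hP : IsLinearDiagram M d P) :
    (lpF (M+d) (Ph (M+d) m P)).card + (Sm M m).card + 1 = d + (lpF M P \ Sm M m).card := by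
  classical
  have e : lpF (M+d) (Ph (M+d) m P) = (bl (M+d) m).filter (fun i => i + 1 ∈ bl (M+d) m) ∪
      (lpF M P \ Sm M m).image (sg m) := by
    ext x
    simp only [lpF, mem_union, mem_image, mem_filter, mem_sdiff, Sm, Ph, mem_insert]
    constructor
    · rintro ⟨hx, b, rfl | ⟨c, hc, rfl⟩, h1, h2⟩
      · exact Or.inl ⟨h1, h2⟩
      · right
        obtain ⟨j, hj, rfl⟩ := mem_image.1 h1
        obtain ⟨j', hj', e⟩ := mem_image.1 h2
        have hlt : j < j' := by rw [← (sg_mono m).lt_iff_lt]; omega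
        have hle := (sg_mono m).monotone (show j + 1 ≤ j' from hlt)
        have hs := sg_succ m j
        have : j' = j + 1 := (sg_mono m).injective (by omega)
        subst this
        refine ⟨j, ⟨⟨hP.2.1 c hc j hj, c, hc, hj, hj'⟩, ?_⟩, rfl⟩
        rintro ⟨_, hh⟩
        omega
    · rintro (⟨h1, h2⟩ | ⟨j, ⟨⟨hj, c, hc, h1, h2⟩, h3⟩, rfl⟩)
      · exact ⟨(mem_filter.1 h1).1, _, Or.inl rfl, h1, h2⟩
      · refine ⟨?_, _, Or.inr ⟨c, hc, rfl⟩, mem_image_of_mem _ h1, ?_⟩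
        · rw [mem_Icc, sg_pos_iff, sg_le_iff h]; exact mem_Icc.1 hj
        · have : m j = 0 := by by_contra hh; exact h3 ⟨hj, hh⟩
          have hs := sg_succ m j
          rw [this] at hs
          exact mem_image.2 ⟨j+1, h2, hs⟩
  rw [e, card_union_of_disjoint, card_image_of_injective _ (sg_mono m).injective]
  · have := loops_bl h
    omega
  · rw [disjoint_left]
    intro x hx hx2
    obtain ⟨j, _, hj⟩ := mem_image.1 hx2
    exact (mem_bl h x).1 (mem_filter.1 hx).1 j hj

lemma diag_eq {N d P} (hP : IsLinearDiagram N d P) {x b c} (hb : b ∈ P) (hc : c ∈ P) (h1 : x ∈ b)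
    (h2 : x ∈ c) : b = c :=
  (hP.2.2 x (hP.2.1 b hb x h1)).unique ⟨hb, h1⟩ ⟨hc, h2⟩

lemma Ph_inj {M d m m' P P'} (h : m ∈ MS M d) (hP : IsLinearDiagram M d P) (h' : m' ∈ MS M d)
    (hP' : IsLinearDiagram M d P') (e : Ph (M+d) m P = Ph (M+d) m' P') : m = m' ∧ P = P' := by
  classical
  have hb : bl (M+d) m = bl (M+d) m' := by
    refine diag_eq (Ph_diag h hP) (mem_insert_self _ _) ?_ (one_mem_bl h) (one_mem_bl h')
    rw [e]; exact mem_insert_self _ _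
  have hr : Set.range (sg m) = Set.range (sg m') := by
    ext x
    have h1 := mem_bl h x
    have h2 := mem_bl h' x
    rw [hb] at h1
    have := not_congr (h1.symm.trans h2)
    push Not at this
    exact this
  have hs : sg m = sg m' := ((sg_mono m).range_inj (sg_mono m')).1 hr
  have hm : m = m' := by
    funext g
    have h1 := sg_succ m g
    have h2 := sg_succ m' g
    rw [hs] at h1
    omega
  subst hm
  refine ⟨rfl, ?_⟩
  have key : ∀ Q : Finset (Finset ℕ), (∀ b ∈ Q, b.card = d) → bl (M+d) m ∉ Q.image (fun b => b.image (sg m)) := by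
    intro Q hQ hc
    obtain ⟨b, hb, he⟩ := mem_image.1 hc
    have := one_mem_bl h
    rw [← he] at this
    obtain ⟨j, hj, hj'⟩ := mem_image.1 this
    exact (mem_bl h _).1 (one_mem_bl h) j hj'
  have e2 := congrArg (fun Q => Q.erase (bl (M+d) m)) e
  simp only [Ph] at e2
  rw [erase_insert (key P hP.1), erase_insert (key P' hP'.1)] at e2
  exact image_injective (image_injective (sg_mono m).injective) e2

lemma Ph_surj {M d Q} (hd : 1 ≤ d) (hQ : IsLinearDiagram (M+d) d Q) :
    ∃ m ∈ MS M d, ∃ P, IsLinearDiagram M d P ∧ Ph (M+d) m P = Q := by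
  classical
  obtain ⟨B, ⟨hB, h1B⟩, -⟩ := hQ.2.2 1 (by simp; omega)
  set p : ℕ → Prop := fun x => x ∉ B
  have hinf : (Set.ofPred p).Infinite := B.finite_toSet.infinite_compl
  let σ := Nat.nth p
  have hσ : StrictMono σ := Nat.nth_strictMono hinf
  have hr : ∀ x, x ∉ B ↔ ∃ j, σ j = x := by
    intro x
    have := Nat.range_nth_of_infinite hinf
    exact (Set.ext_iff.1 this x).symm
  let m : ℕ → ℕ := fun g => σ (g+1) - σ g - 1
  have h00 : σ 0 = 0 := by
    have : (0:ℕ) ∉ B := fun hc => by simpa using hQ.2.1 B hB 0 hc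
    obtain ⟨j, hj⟩ := (hr 0).1 this
    have := hσ.monotone (Nat.zero_le j)
    omega
  have hsg : ∀ j, sg m j = σ j := by
    intro j
    induction j with
    | zero => rw [sg_zero, h00]
    | succ j ih =>
      have := hσ (Nat.lt_succ_self j)
      rw [sg_succ, ih]; simp only [m]; simp only [Nat.succ_eq_add_one] at this; omega
  have hsg' : sg m = σ := funext hsg
  -- tail
  have htail : ∀ j, σ (M + 1 + j) = M + 1 + j + d := by
    intro j
    have hx : M + 1 + j + d ∉ B := fun hc => by
      have := hQ.2.1 B hB _ hc
      simp at this; omega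
    have hcnt := Nat.nth_count (p := p) hx
    have : Nat.count p (M+1+j+d) = M + 1 + j := by
      rw [Nat.count_eq_card_filter_range]
      have e : (range (M+1+j+d)).filter p = range (M+1+j+d) \ B := by
        ext; simp [p]
      rw [e, card_sdiff_of_subset, hQ.1 B hB, card_range]
      · omega
      · intro x hx
        have := hQ.2.1 B hB _ hx
        simp at this ⊢; omega
    rw [this] at hcnt
    exact hcnt
  have hm : m ∈ MS M d := by
    simp only [MS, mem_filter, mem_piAntidiag]
    refine ⟨⟨?_, ?_⟩, ?_⟩
    · have h1 := hsg (M+1)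
      have h2 := htail 0
      rw [sg] at h1
      simp only [add_zero] at h2
      change ∑ g ∈ range (M+1), m g = d
      omega
    · intro g hg
      by_contra hc
      rw [mem_range, not_lt] at hc
      have h1 := htail (g - M - 1)
      have h2 := htail (g - M - 1 + 1)
      rw [show M + 1 + (g - M - 1) = g by omega] at h1
      rw [show M + 1 + (g - M - 1 + 1) = g + 1 by omega] at h2
      simp only [m] at hg
      omega
    · intro hc
      have := sg_succ m 0
      rw [hsg, hsg, hc, h00] at this
      exact (hr 1).2 ⟨_, this⟩ h1B
  have hbl : bl (M+d) m = B := by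
    ext x
    rw [mem_bl hm, hsg']
    have := not_congr (hr x)
    push Not at this
    exact this.symm
  have hinj : Function.Injective σ := hσ.injective
  refine ⟨m, hm, (Q.erase B).image (fun b => b.preimage σ hinj.injOn), ?_, ?_⟩
  · have hsub : ∀ b ∈ Q.erase B, ∀ x ∈ b, ∃ j, σ j = x := by
      intro b hb x hx
      rw [← hr]
      intro hxB
      exact (mem_erase.1 hb).1 (diag_eq hQ (mem_erase.1 hb).2 hB hx hxB)
    refine ⟨?_, ?_, ?_⟩
    · intro b hb
      obtain ⟨c, hc, rfl⟩ := mem_image.1 hb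
      rw [← hQ.1 c (mem_erase.1 hc).2, ← card_image_of_injective _ hinj, image_preimage_of_bij]
      exact ⟨fun _ h => h, hinj.injOn, fun x hx => by
        obtain ⟨j, rfl⟩ := hsub c hc x hx
        exact ⟨j, hx, rfl⟩⟩
    · intro b hb x hx
      obtain ⟨c, hc, rfl⟩ := mem_image.1 hb
      have := hQ.2.1 c (mem_erase.1 hc).2 _ (mem_preimage.1 hx)
      rw [mem_Icc, ← hsg, sg_pos_iff, sg_le_iff hm] at this
      exact mem_Icc.2 this
    · intro j hj
      have hj' := hj
      rw [mem_Icc, ← sg_pos_iff m, ← sg_le_iff hm, hsg, ← mem_Icc] at hj'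
      obtain ⟨c, ⟨hc1, hc2⟩, hc3⟩ := hQ.2.2 _ hj'
      refine ⟨c.preimage σ hinj.injOn, ⟨mem_image_of_mem _ (mem_erase.2 ⟨?_, hc1⟩), mem_preimage.2 hc2⟩, ?_⟩
      · rintro rfl
        exact (hr _).2 ⟨j, rfl⟩ hc2
      · rintro b ⟨hb, hjb⟩
        obtain ⟨c', hc', rfl⟩ := mem_image.1 hb
        have := hc3 c' ⟨(mem_erase.1 hc').2, mem_preimage.1 hjb⟩
        subst this
        rfl
  · have hsub : ∀ b ∈ Q.erase B, ∀ x ∈ b, ∃ j, σ j = x := by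
      intro b hb x hx
      rw [← hr]
      intro hxB
      exact (mem_erase.1 hb).1 (diag_eq hQ (mem_erase.1 hb).2 hB hx hxB)
    rw [Ph, hbl, image_image, hsg']
    have : (Q.erase B).image ((fun b => b.image σ) ∘ (fun b => b.preimage σ hinj.injOn)) = Q.erase B := by
      conv_rhs => rw [← image_id (s := Q.erase B)]
      apply image_congr
      intro c hc
      simp only [Function.comp, id]
      rw [image_preimage_of_bij]
      exact ⟨fun _ h => h, hinj.injOn, fun x hx => by
        obtain ⟨j, rfl⟩ := hsub c hc x hx
        exact ⟨j, hx, rfl⟩⟩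
    rw [this, insert_erase hB]

lemma card_fib {M d : ℕ} (hd : 1 ≤ d) {S : Finset ℕ} (hS : S ⊆ Icc 1 M) :
    ((MS M d).filter (fun m => Sm M m = S)).card = (d-1).choose S.card := by
  classical
  by_cases hc : S.card + 1 ≤ d
  · have h0 : 0 ∉ S := fun h => by simpa using hS h
    have hT : (insert 0 S).card = S.card + 1 := card_insert_of_notMem h0
    have key := card_finsuppAntidiag_nat_eq_choose (s := insert 0 S) (d - 1 - S.card)
    rw [hT, show S.card + 1 + (d - 1 - S.card) - 1 = d - 1 by omega, Nat.choose_symm (by omega)] at key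
    have hTs : insert 0 S ⊆ range (M+1) := by
      intro x hx
      rcases mem_insert.1 hx with rfl | hx
      · simp
      · have := mem_Icc.1 (hS hx); simp; omega
    rw [← key]
    symm
    refine card_bij (fun f _ g => f g + if g ∈ insert 0 S then 1 else 0) ?_ ?_ ?_
    · intro f hf
      rw [mem_finsuppAntidiag] at hf
      have hz : ∀ g, g ∉ insert 0 S → f g = 0 := fun g hg => by
        by_contra hh; exact hg (hf.2 (Finsupp.mem_support_iff.2 hh))
      simp only [MS, mem_filter, mem_piAntidiag]
      refine ⟨⟨⟨?_, ?_⟩, ?_⟩, ?_⟩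
      · rw [← sum_subset hTs, sum_add_distrib, hf.1, sum_congr rfl (g := fun _ => 1)]
        · rw [sum_const, hT]; simp; omega
        · intro x hx; simp only [if_pos hx]
        · intro x _ hx; simp only [if_neg hx, hz x hx]; rfl
      · intro g hg
        apply hTs
        by_contra hh
        simp only [if_neg hh, hz g hh] at hg
        exact hg rfl
      · simp
      · ext g
        simp only [Sm, mem_filter]
        constructor
        · rintro ⟨h1, h2⟩
          by_contra hh
          have : g ∉ insert 0 S := by
            rw [mem_insert]; rintro (rfl | h3)
            · simp at h1
            · exact hh h3
          simp only [if_neg this, hz g this] at h2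
          exact h2 rfl
        · intro hg
          refine ⟨hS hg, ?_⟩
          rw [if_pos (mem_insert_of_mem hg)]; omega
    · intro f _ f' _ e
      ext g
      have := congrFun e g
      simpa using this
    · intro m hm
      simp only [MS, mem_filter, mem_piAntidiag] at hm
      obtain ⟨⟨⟨h1, h2⟩, h3⟩, h4⟩ := hm
      have hmT : ∀ g, m g ≠ 0 ↔ g ∈ insert 0 S := by
        intro g
        rw [mem_insert, ← h4, Sm, mem_filter, mem_Icc]
        constructor
        · intro hg
          have := mem_range.1 (h2 g hg)
          by_cases hg0 : g = 0
          · left; exact hg0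
          · right; exact ⟨by omega, hg⟩
        · rintro (rfl | h); exacts [h3, h.2]
      let f : ℕ →₀ ℕ := Finsupp.onFinset (insert 0 S) (fun g => m g - 1) (by
        intro g hg; rw [← hmT]; omega)
      have hfe : ∀ g, f g + (if g ∈ insert 0 S then 1 else 0) = m g := by
        intro g
        have := hmT g
        simp only [f, Finsupp.onFinset_apply]
        split_ifs with hg
        · have := this.2 hg; omega
        · have : ¬ (m g ≠ 0) := fun h => hg (this.1 h)
          omega
      refine ⟨f, ?_, funext hfe⟩
      rw [mem_finsuppAntidiag]
      refine ⟨?_, Finsupp.support_onFinset_subset⟩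
      rw [← sum_subset hTs, ← sum_congr rfl (fun g _ => hfe g), sum_add_distrib,
        sum_congr rfl (g := fun _ => 1) (f := fun g => if g ∈ insert 0 S then 1 else 0), sum_const, hT] at h1
      · rw [smul_eq_mul, mul_one] at h1
        have h1b : (insert 0 S).sum f + (S.card + 1) = d := h1
        omega
      · intro x hx; simp only [if_pos hx]
      · intro x _ hx; by_contra hh; exact hx ((hmT x).1 hh)
  · rw [Nat.choose_eq_zero_of_lt (by omega), card_eq_zero, filter_eq_empty_iff]
    intro m hm hc
    have := loops_bl hm
    rw [hc] at this
    omega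

lemma iChoose_nat (x y : ℕ) : iChoose x y = x.choose y := by
  unfold iChoose
  split_ifs with h
  · simp
  · rw [Nat.choose_eq_zero_of_lt]; omega

lemma iChoose_neg (x y : ℤ) (h : y < 0) : iChoose x y = 0 := by
  unfold iChoose
  rw [if_neg]; omega

lemma card_S (X L : Finset ℕ) (hL : L ⊆ X) (d k i : ℕ) :
    (X.powerset.filter (fun S => S.card + i + 1 = d ∧ k + S.card + 1 = d + (L \ S).card)).card =
    iChoose (L.card) (L.card + i - k) * iChoose (X.card - L.card) (d - 2 * i - L.card + k - 1) := by
  classical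
  have hXL : (X \ L).card = X.card - L.card := card_sdiff_of_subset hL
  have hle := card_le_card hL
  have hS : ∀ S ⊆ X, (S ∩ L).card + (S \ L).card = S.card ∧ (S ∩ L).card + (L \ S).card = L.card := by
    intro S _
    refine ⟨card_inter_add_card_sdiff S L, ?_⟩
    rw [inter_comm]; exact card_inter_add_card_sdiff L S
  by_cases hn : (L.card + i - k : ℤ) < 0 ∨ (d - 2 * i - L.card + k - 1 : ℤ) < 0
  · have : iChoose (L.card) (L.card + i - k) * iChoose (X.card - L.card) (d - 2 * i - L.card + k - 1) = 0 := by
      rcases hn with h | h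
      · rw [iChoose_neg _ _ h, zero_mul]
      · rw [iChoose_neg _ _ h, mul_zero]
    rw [this, card_eq_zero, filter_eq_empty_iff]
    rintro S hSX ⟨h1, h2⟩
    have := hS S (mem_powerset.1 hSX)
    omega
  · push Not at hn
    obtain ⟨u, hu⟩ := Int.eq_ofNat_of_zero_le hn.1
    obtain ⟨v, hv⟩ := Int.eq_ofNat_of_zero_le hn.2
    rw [hu, hv, show (X.card - L.card : ℤ) = ((X.card - L.card : ℕ) : ℤ) by omega, iChoose_nat,
      iChoose_nat, ← hXL, ← card_powersetCard, ← card_powersetCard, ← card_product]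
    refine card_nbij' (fun S => (S ∩ L, S \ L)) (fun p => p.1 ∪ p.2) ?_ ?_ ?_ ?_
    · intro S h
      simp only [coe_filter, mem_powerset, Set.mem_ofPred_eq] at h
      have := hS S h.1
      simp only [coe_product, Set.mem_prod, mem_coe, mem_powersetCard]
      refine ⟨⟨inter_subset_right, by omega⟩, sdiff_subset_sdiff h.1 le_rfl, by omega⟩
    · rintro ⟨A, B⟩ h
      simp only [coe_product, Set.mem_prod, mem_coe, mem_powersetCard] at h
      simp only [coe_filter, mem_powerset, Set.mem_ofPred_eq]
      obtain ⟨⟨a1, a2⟩, b1, b2⟩ := h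
      have hsub : A ∪ B ⊆ X := union_subset (a1.trans hL) (b1.trans sdiff_subset)
      have dj : Disjoint A B := (disjoint_sdiff (s := L) (t := X)).mono a1 b1
      have hc := card_union_of_disjoint dj
      have e : (A ∪ B) ∩ L = A := by
        ext x
        have := @a1 x; have := @b1 x
        simp only [mem_inter, mem_union, mem_sdiff] at *; tauto
      have := hS _ hsub
      rw [e] at this
      refine ⟨hsub, ?_, ?_⟩ <;> omega
    · intro S _
      ext x; simp only [mem_inter, mem_union, mem_sdiff]; tauto
    · rintro ⟨A, B⟩ h
      simp only [coe_product, Set.mem_prod, mem_coe, mem_powersetCard] at h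
      obtain ⟨⟨a1, a2⟩, b1, b2⟩ := h
      ext x
      all_goals
        have := @a1 x; have := @b1 x
        simp only [mem_inter, mem_union, mem_sdiff] at *; tauto

def cc (d M k : ℕ) (t : ℤ) : ℕ := ∑ i ∈ range d,
            (d - 1).choose i * iChoose t (t + i - k) *
              iChoose (M - t) ((d : ℤ) - 2 * i - t + k - 1)

lemma card_m {M d : ℕ} (hd : 1 ≤ d) (k : ℕ) {L : Finset ℕ} (hL : L ⊆ Icc 1 M) :
    ((MS M d).filter (fun m => k + (Sm M m).card + 1 = d + (L \ Sm M m).card)).card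
      = cc d M k L.card := by
  classical
  rw [card_eq_sum_card_fiberwise (f := Sm M)
    (t := (Icc 1 M).powerset.filter (fun S => k + S.card + 1 = d + (L \ S).card))]
  · have e1 : ∀ S ∈ (Icc 1 M).powerset.filter (fun S => k + S.card + 1 = d + (L \ S).card),
      (((MS M d).filter (fun m => k + (Sm M m).card + 1 = d + (L \ Sm M m).card)).filter
        (fun m => Sm M m = S)).card = ∑ i ∈ range d, if S.card + i + 1 = d then (d-1).choose i else 0 := by
      intro S hS
      rw [mem_filter, mem_powerset] at hS
      rw [filter_filter]
      have : (MS M d).filter (fun m => k + (Sm M m).card + 1 = d + (L \ Sm M m).card ∧ Sm M m = S)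
        = (MS M d).filter (fun m => Sm M m = S) := by
        apply filter_congr
        intro m _
        constructor
        · exact fun h => h.2
        · rintro rfl; exact ⟨hS.2, rfl⟩
      rw [this, card_fib hd hS.1]
      by_cases hc : S.card + 1 ≤ d
      · rw [sum_eq_single (d - 1 - S.card)]
        · rw [if_pos (by omega), Nat.choose_symm (by omega)]
        · intro b _ hb; rw [if_neg (by omega)]
        · intro h; simp at h; omega
      · rw [Nat.choose_eq_zero_of_lt (by omega), sum_eq_zero]
        intro i _; rw [if_neg (by omega)]
    rw [sum_congr rfl e1, sum_comm, cc]
    apply sum_congr rfl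
    intro i _
    rw [← sum_filter, sum_const, filter_filter, smul_eq_mul]
    have := card_S (Icc 1 M) L hL d k i
    rw [Nat.card_Icc, Nat.add_sub_cancel] at this
    rw [mul_assoc, ← this, mul_comm]
    congr 3
    ext S
    tauto
  · intro m hm
    simp only [coe_filter, Set.mem_ofPred_eq, mem_powerset] at hm ⊢
    exact ⟨filter_subset _ _, hm.2⟩

open Classical in
noncomputable def DD (M d : ℕ) : Finset (Finset (Finset ℕ)) :=
  (Icc 1 M).powerset.powerset.filter (fun P => IsLinearDiagram M d P)

lemma mem_DD {M d P} : P ∈ DD M d ↔ IsLinearDiagram M d P := by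
  simp only [DD, mem_filter, mem_powerset, and_iff_right_iff_imp]
  intro h b hb
  rw [mem_powerset]
  exact fun x hx => h.2.1 b hb x hx

lemma numAZ_eq (d n : ℕ) (t : ℤ) :
    numAZ d n t = ((DD (n*d) d).filter (fun P => ((lpF (n*d) P).card : ℤ) = t)).card := by
  classical
  unfold numAZ
  split_ifs with h
  · rw [numA, ← Set.ncard_coe_finset]
    congr 1
    ext P
    simp only [Set.mem_ofPred_eq, coe_filter, mem_DD]
    constructor
    · rintro ⟨h1, h2⟩; rw [linLoops_eq h1] at h2; exact ⟨h1, by omega⟩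
    · rintro ⟨h1, h2⟩; rw [linLoops_eq h1]; exact ⟨h1, by omega⟩
  · symm
    rw [card_eq_zero, filter_eq_empty_iff]
    intro P _ hc; omega

lemma numA_eq (d n k : ℕ) (hd : 1 ≤ d) :
    numA d (n+1) k = ∑ P ∈ DD (n*d) d, cc d (n*d) k (lpF (n*d) P).card := by
  classical
  have e : {P : Finset (Finset ℕ) | IsLinearDiagram ((n+1) * d) d P ∧ linLoops ((n+1) * d) P = k}
    = (fun p : (ℕ → ℕ) × Finset (Finset ℕ) => Ph (n*d+d) p.1 p.2) ''
      ((MS (n*d) d ×ˢ DD (n*d) d).filter (fun p =>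
        k + (Sm (n*d) p.1).card + 1 = d + (lpF (n*d) p.2 \ Sm (n*d) p.1).card) : Finset _) := by
    ext Q
    rw [add_mul, one_mul]
    simp only [Set.mem_ofPred_eq, coe_filter, mem_product, mem_DD, Set.mem_image, Prod.exists]
    constructor
    · rintro ⟨h1, h2⟩
      obtain ⟨m, hm, P, hP, rfl⟩ := Ph_surj hd h1
      rw [linLoops_eq h1] at h2
      have := Ph_lp hm hP
      exact ⟨m, P, ⟨⟨hm, hP⟩, by omega⟩, rfl⟩
    · rintro ⟨m, P, ⟨⟨hm, hP⟩, h2⟩, rfl⟩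
      have := Ph_lp hm hP
      have h1 := Ph_diag hm hP
      rw [linLoops_eq h1]
      exact ⟨h1, by omega⟩
  rw [numA, e, Set.InjOn.ncard_image, Set.ncard_coe_finset, card_filter, sum_product_right]
  · apply sum_congr rfl
    intro P _
    rw [← card_filter]
    have hl : lpF (n*d) P ⊆ Icc 1 (n*d) := by unfold lpF; exact filter_subset _ _
    exact card_m (M := n*d) (L := lpF (n*d) P) hd k hl
  · rintro ⟨m, P⟩ h ⟨m', P'⟩ h' e
    simp only [coe_filter, Set.mem_ofPred_eq, mem_product, mem_DD] at h h'
    obtain ⟨h1, h2⟩ := Ph_inj h.1.1 h.1.2 h'.1.1 h'.1.2 e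
    rw [h1, h2]

/-- the basic recurrence for `a(n,k)`. -/
theorem linear_recurrence (d : ℕ) (hd : 2 ≤ d) (n : ℕ) (hn : 1 ≤ n) (k : ℕ)
    (hk : k ≤ n * (d - 1)) :
    numA d n k =
      ∑ t ∈ Finset.Icc ((k : ℤ) - d + 1) ((k : ℤ) + d - 1),
        (∑ i ∈ Finset.range d,
            (d - 1).choose i * iChoose t (t + i - k) *
              iChoose ((d : ℤ) * ((n : ℤ) - 1) - t) ((d : ℤ) - 2 * i - t + k - 1)) *
          numAZ d (n - 1) t := by
  classical
  obtain ⟨n, rfl⟩ : ∃ n', n = n' + 1 := ⟨n - 1, by omega⟩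
  rw [numA_eq d n k (by omega), Nat.add_sub_cancel]
  have hcc : ∀ t : ℤ, (∑ i ∈ Finset.range d,
            (d - 1).choose i * iChoose t (t + i - k) *
              iChoose ((d : ℤ) * (((n + 1 : ℕ) : ℤ) - 1) - t) ((d : ℤ) - 2 * i - t + k - 1))
      = cc d (n*d) k t := by
    intro t
    rw [cc]
    have : (d : ℤ) * (((n + 1 : ℕ) : ℤ) - 1) = ((n * d : ℕ) : ℤ) := by push_cast; ring
    rw [this]
  simp only [hcc, numAZ_eq, card_filter, mul_sum, mul_ite, mul_one, mul_zero]
  rw [sum_comm]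
  apply sum_congr rfl
  intro P _
  rw [sum_ite_eq]
  split_ifs with h
  · rfl
  · rw [cc]
    apply sum_eq_zero
    intro i hi
    rw [mem_range] at hi
    rw [mem_Icc] at h
    by_cases h1 : ((lpF (n*d) P).card : ℤ) + i - k < 0
    · rw [iChoose_neg _ _ h1]; simp
    · rw [iChoose_neg _ ((d : ℤ) - 2 * i - _ + k - 1) (by omega)]; simp
end

section
/- Fix integers d ≥ 2 and n ≥ 2, and let G be the complete n-partite graph K_{d,…,d}, i.e. the complete multipartite graph on vertex set Σ i : Fin n, Fin d in which two vertices are adjacent if and only if they lie in different parts. Then the number of pairs (v, p), where v is a vertex of G and p is a closed walk at v that is a Hamiltonian cycle of G, equals n! · (d!)^n · b(n). -/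
open SimpleGraph in
lemma aux_walk_exists {V : Type*} (G : SimpleGraph V) (f : ℕ → V)
    (hf : ∀ i, G.Adj (f i) (f (i+1))) (m : ℕ) :
    ∃ w : G.Walk (f 0) (f m), w.length = m ∧ ∀ i ≤ m, w.getVert i = f i := by
  induction m generalizing f with
  | zero => exact ⟨Walk.nil, rfl, by intro i hi; obtain rfl : i = 0 := by omega
                                     simp⟩
  | succ m ih =>
    obtain ⟨w, hw, h⟩ := ih (fun i => f (i+1)) (fun i => hf (i+1))
    refine ⟨Walk.cons (hf 0) w, by simp [hw], ?_⟩
    intro i hi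
    cases i with
    | zero => simp
    | succ i => simpa using h i (by omega)

open SimpleGraph in
lemma aux_step1 {V : Type*} [Fintype V] [DecidableEq V] (G : SimpleGraph V) (N : ℕ)
    (hN : 3 ≤ N) (hV : Fintype.card V = N) :
    Nat.card {p : (v : V) × G.Walk v v // p.2.IsHamiltonianCycle} =
      Nat.card {e : ZMod N ≃ V // ∀ i, G.Adj (e i) (e (i+1))} := by
  have : NeZero N := ⟨by omega⟩
  have : Fact (1 < N) := ⟨by omega⟩
  have hsucc : ∀ i : ZMod N, (i+1).val = if i.val + 1 < N then i.val + 1 else 0 := by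
    intro i
    have hi := ZMod.val_lt i
    rw [ZMod.val_add, ZMod.val_one]
    split_ifs with h
    · exact Nat.mod_eq_of_lt h
    · rw [show i.val + 1 = N by omega, Nat.mod_self]
  have hbij : ∀ p : {p : (v : V) × G.Walk v v // p.2.IsHamiltonianCycle},
      Function.Bijective (fun i : ZMod N => p.1.2.getVert i.val) := by
    rintro ⟨⟨v, p⟩, hp⟩
    have hl := hp.length_eq
    rw [hV] at hl
    simp only at hp hl
    rw [Fintype.bijective_iff_injective_and_card]
    refine ⟨?_, by rw [ZMod.card, hV]⟩
    intro i j hij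
    have hi := ZMod.val_lt i
    have hj := ZMod.val_lt j
    apply ZMod.val_injective N
    exact hp.isCycle.getVert_injOn' (by simp only [Set.mem_ofPred_eq]; omega)
      (by simp only [Set.mem_ofPred_eq]; omega) hij
  have hadj : ∀ p : {p : (v : V) × G.Walk v v // p.2.IsHamiltonianCycle}, ∀ i : ZMod N,
      G.Adj (Equiv.ofBijective _ (hbij p) i) (Equiv.ofBijective _ (hbij p) (i+1)) := by
    rintro ⟨⟨v, p⟩, hp⟩ i
    have hl := hp.length_eq
    rw [hV] at hl
    simp only at hp hl
    have hi := ZMod.val_lt i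
    simp only [Equiv.ofBijective_apply]
    have h := p.adj_getVert_succ (i := i.val) (by omega)
    rw [hsucc]
    split_ifs with h'
    · exact h
    · have h2 : i.val + 1 = p.length := by omega
      rw [h2, Walk.getVert_length] at h
      simpa using h
  refine Nat.card_eq_of_bijective (fun p => ⟨Equiv.ofBijective _ (hbij p), hadj p⟩) ⟨?_, ?_⟩
  · rintro ⟨⟨v, p⟩, hp⟩ ⟨⟨w, q⟩, hq⟩ h
    have hlp := hp.length_eq
    have hlq := hq.length_eq
    rw [hV] at hlp hlq
    simp only at hp hq hlp hlq
    have h1 : ∀ i : ZMod N, p.getVert i.val = q.getVert i.val := by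
      intro i
      have := congrArg (fun e => e.1 i) h
      simpa using this
    have h0 := h1 0
    simp only [ZMod.val_zero, Walk.getVert_zero] at h0
    subst h0
    have : p = q := by
      apply Walk.ext_getVert_le_length (by omega)
      intro k hk
      rcases Nat.lt_or_ge k N with hk' | hk'
      · have := h1 (k : ZMod N)
        rwa [ZMod.val_natCast_of_lt hk'] at this
      · rw [Walk.getVert_of_length_le _ (by omega), Walk.getVert_of_length_le _ (by omega)]
    subst this
    rfl
  · rintro ⟨e, he⟩
    obtain ⟨w, hw, h⟩ := aux_walk_exists G (fun i : ℕ => e (i : ZMod N))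
      (fun i => by simpa using he (i : ZMod N)) N
    have hE : e ((N : ℕ) : ZMod N) = e ((0 : ℕ) : ZMod N) := by simp
    refine ⟨⟨⟨_, w.copy rfl hE⟩, ?_⟩, ?_⟩
    · rw [Walk.isHamiltonianCycle_iff_isCycle_and_length_eq]
      refine ⟨?_, by simp [hw, hV]⟩
      rw [Walk.isCycle_iff_isPath_tail_and_le_length]
      refine ⟨?_, by simp [hw, hN]⟩
      rw [← Walk.IsPath.getVert_injOn_iff]
      intro i hi j hj hij
      have hnn : ¬ (w.copy rfl hE).Nil := by
        rw [← Walk.length_eq_zero_iff, Walk.length_copy, hw]; omega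
      have hlen := Walk.length_tail_add_one hnn
      simp only [Walk.length_copy, hw] at hlen
      simp only [Set.mem_ofPred_eq] at hi hj
      simp only [Walk.getVert_tail, Walk.getVert_copy] at hij
      rw [h _ (by omega), h _ (by omega)] at hij
      have := e.injective hij
      push_cast at this
      have := add_right_cancel this
      rw [ZMod.natCast_eq_natCast_iff'] at this
      rwa [Nat.mod_eq_of_lt (by omega), Nat.mod_eq_of_lt (by omega)] at this
    · apply Subtype.ext
      apply Equiv.ext
      intro i
      have hi := ZMod.val_lt i
      simp only [Equiv.ofBijective_apply, Walk.getVert_copy]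
      rw [h _ (by omega)]
      simp

/-- good colourings -/
def AuxGood (d n N : ℕ) (c : ZMod N → Fin n) : Prop :=
  (∀ k, Nat.card {x // c x = k} = d) ∧ ∀ i, c i ≠ c (i+1)

lemma aux_step2 (d n N : ℕ) [NeZero N] (c : ZMod N → Fin n) (hc : AuxGood d n N c) :
    Nat.card {e : {e : ZMod N ≃ (Σ _ : Fin n, Fin d) // ∀ i, (e i).1 ≠ (e (i+1)).1} //
      (fun x => (e.1 x).1) = c} = d.factorial ^ n := by
  have h1 : Nat.card (∀ k, Fin d ≃ {x // c x = k}) = d.factorial ^ n := by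
    rw [Nat.card_pi]
    rw [Finset.prod_congr rfl (g := fun _ => d.factorial)]
    · simp
    · intro k _
      have hk := hc.1 k
      rw [Nat.card_eq_fintype_card] at hk
      rw [Nat.card_eq_fintype_card, Fintype.card_equiv (Fintype.equivFinOfCardEq hk).symm]
      simp
  rw [← h1]
  symm
  let F : (∀ k, Fin d ≃ {x // c x = k}) → (ZMod N ≃ (Σ _ : Fin n, Fin d)) := fun γ =>
    ((Equiv.sigmaCongrRight γ).trans (Equiv.sigmaFiberEquiv c)).symm
  have hFs : ∀ γ k j, (F γ).symm ⟨k, j⟩ = (γ k j).1 := fun γ k j => rfl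
  have hF : ∀ γ x, (F γ x).1 = c x := by
    intro γ x
    obtain ⟨⟨k, j⟩, rfl⟩ := (F γ).symm.surjective x
    rw [Equiv.apply_symm_apply, hFs]
    exact (γ k j).2.symm
  refine Nat.card_eq_of_bijective (fun γ => ⟨⟨F γ, fun i => by
    rw [hF, hF]; exact hc.2 i⟩, funext (hF γ)⟩) ⟨?_, ?_⟩
  · intro γ γ' h
    have h' : F γ = F γ' := congrArg (fun e => e.1.1) h
    funext k
    ext j
    rw [← hFs, ← hFs, h']
  · rintro ⟨⟨e, he⟩, rfl⟩
    refine ⟨fun k => Equiv.ofBijective (fun j => ⟨e.symm ⟨k, j⟩, by simp⟩) ⟨?_, ?_⟩, ?_⟩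
    · intro i j hij
      simpa using hij
    · rintro ⟨x, rfl⟩
      exact ⟨(e x).2, by simp⟩
    · apply Subtype.ext
      apply Subtype.ext
      apply Equiv.symm_bijective.injective
      ext ⟨k, j⟩
      rfl

/-- diagram of a colouring -/
noncomputable def auxDiag (n N : ℕ) [NeZero N] (c : ZMod N → Fin n) : Finset (Finset (ZMod N)) :=
  Finset.univ.image (fun k => Finset.univ.filter (fun x => c x = k))

lemma aux_mem_diag (n N : ℕ) [NeZero N] (c : ZMod N → Fin n) (b) :
    b ∈ auxDiag n N c ↔ ∃ k, Finset.univ.filter (fun x => c x = k) = b := by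
  simp [auxDiag]

lemma aux_diag_good (d n N : ℕ) [NeZero N] (c : ZMod N → Fin n) (hc : AuxGood d n N c) :
    IsChordDiagram N d (auxDiag n N c) ∧ ChordLoopless N (auxDiag n N c) := by
  refine ⟨⟨?_, ?_⟩, ?_⟩
  · intro b hb
    obtain ⟨k, rfl⟩ := (aux_mem_diag n N c b).1 hb
    rw [← hc.1 k, Nat.card_eq_fintype_card, Fintype.card_subtype]
  · intro x
    refine ⟨Finset.univ.filter (fun y => c y = c x), ⟨(aux_mem_diag n N c _).2 ⟨_, rfl⟩, by simp⟩, ?_⟩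
    rintro b ⟨hb, hx⟩
    obtain ⟨k, rfl⟩ := (aux_mem_diag n N c b).1 hb
    simp only [Finset.mem_filter, Finset.mem_univ, true_and] at hx
    rw [hx]
  · intro i b hb h1 h2
    obtain ⟨k, rfl⟩ := (aux_mem_diag n N c b).1 hb
    simp only [Finset.mem_filter, Finset.mem_univ, true_and] at h1 h2
    exact hc.2 i (h1.trans h2.symm)

lemma aux_step3 (d n N : ℕ) [NeZero N] (hN : N = n * d) (hd : 0 < d)
    (P : Finset (Finset (ZMod N)))
    (hP : IsChordDiagram N d P ∧ ChordLoopless N P) :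
    Nat.card {c : {c : ZMod N → Fin n // AuxGood d n N c} // auxDiag n N c.1 = P}
      = n.factorial := by
  obtain ⟨⟨hcard, hex⟩, hloop⟩ := hP
  have hPn : P.card = n := by
    have h : ∑ b ∈ P, b.card = N := by
      rw [← Finset.card_biUnion]
      · rw [show P.biUnion (fun b => b) = Finset.univ from ?_, Finset.card_univ, ZMod.card]
        ext x
        obtain ⟨b, hb, -⟩ := hex x
        simpa using ⟨b, hb.1, hb.2⟩
      · intro b hb b' hb' hne
        change Disjoint b b'
        rw [Finset.disjoint_left]
        intro x hx hx'
        exact hne ((hex x).unique ⟨hb, hx⟩ ⟨hb', hx'⟩)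
    rw [Finset.sum_congr rfl hcard, Finset.sum_const, smul_eq_mul] at h
    exact Nat.eq_of_mul_eq_mul_right hd (h.trans hN)
  have h1 : Nat.card (Fin n ≃ P) = n.factorial := by
    rw [Nat.card_eq_fintype_card,
      Fintype.card_equiv (Fintype.equivFinOfCardEq (by simpa using hPn)).symm]
    simp
  rw [← h1]
  symm
  choose blk hblk huniq using hex
  let B : ZMod N → P := fun x => ⟨blk x, (hblk x).1⟩
  have hB : ∀ x (b : P), B x = b ↔ x ∈ b.1 := by
    intro x b
    constructor
    · rintro rfl; exact (hblk x).2
    · intro h; exact Subtype.ext (huniq x b.1 ⟨b.2, h⟩).symm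
  have hcol : ∀ (β : Fin n ≃ P) x k, β.symm (B x) = k ↔ x ∈ (β k).1 := by
    intro β x k
    rw [Equiv.symm_apply_eq, hB]
  have hgood : ∀ β : Fin n ≃ P, AuxGood d n N (fun x => β.symm (B x)) := by
    intro β
    refine ⟨?_, ?_⟩
    · intro k
      simp only [hcol]
      rw [Nat.card_eq_fintype_card, Fintype.card_coe]
      exact hcard _ (β k).2
    · intro i h
      have h2 := β.symm.injective h
      exact hloop i (B i).1 (B i).2 ((hB _ _).1 rfl) ((hB _ _).1 h2.symm)
  have hfil : ∀ (β : Fin n ≃ P) k, Finset.univ.filter (fun x => β.symm (B x) = k) = (β k).1 := by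
    intro β k
    ext x
    simp only [Finset.mem_filter, Finset.mem_univ, true_and, hcol]
  have hdiag : ∀ β : Fin n ≃ P, auxDiag n N (fun x => β.symm (B x)) = P := by
    intro β
    ext b
    rw [aux_mem_diag]
    constructor
    · rintro ⟨k, rfl⟩
      rw [hfil]; exact (β k).2
    · intro hb
      exact ⟨β.symm ⟨b, hb⟩, by rw [hfil]; simp⟩
  refine Nat.card_eq_of_bijective (fun β => ⟨⟨_, hgood β⟩, hdiag β⟩) ⟨?_, ?_⟩
  · intro β β' h
    have h' : (fun x => β.symm (B x)) = (fun x => β'.symm (B x)) := congrArg (fun c => c.1.1) h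
    ext1 k
    apply Subtype.ext
    rw [← hfil, ← hfil]
    ext x
    have hx : β.symm (B x) = β'.symm (B x) := congrFun h' x
    rw [Finset.mem_filter, Finset.mem_filter, hx]
  · rintro ⟨⟨c, hc⟩, hcP⟩
    simp only at hcP
    have hbij : Function.Bijective (fun k : Fin n =>
        (⟨Finset.univ.filter (fun x => c x = k), by
          rw [← hcP, aux_mem_diag]; exact ⟨k, rfl⟩⟩ : P)) := by
      constructor
      · intro k k' h
        have hk : 0 < Nat.card {x // c x = k} := by rw [hc.1]; exact hd
        obtain ⟨⟨x, hx⟩⟩ := (Nat.card_pos_iff.1 hk).1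
        have h' := congrArg Subtype.val h
        simp only at h'
        have hm : x ∈ Finset.univ.filter (fun x => c x = k') := by
          rw [← h']; simp [hx]
        simp only [Finset.mem_filter, Finset.mem_univ, true_and] at hm
        exact hx.symm.trans hm
      · rintro ⟨b, hb⟩
        have hb' := hb
        rw [← hcP, aux_mem_diag] at hb'
        obtain ⟨k, hk⟩ := hb'
        exact ⟨k, Subtype.ext hk⟩
    refine ⟨Equiv.ofBijective _ hbij, ?_⟩
    apply Subtype.ext
    apply Subtype.ext
    funext x
    simp only
    rw [hcol]
    simp

lemma aux_card_fib {α β : Type*} [Finite α] [Finite β] (f : α → β) (m : ℕ)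
    (h : ∀ y, Nat.card {x // f x = y} = m) : Nat.card α = m * Nat.card β := by
  have := Fintype.ofFinite β
  rw [← Nat.card_congr (Equiv.sigmaFiberEquiv f), Nat.card_sigma]
  simp [h, mul_comm]

/-- the number of pairs (vertex, Hamiltonian cycle based at it) in the
complete `n`-partite graph with parts of size `d` equals `n! · (d!)^n · b(n)`. -/
theorem hamiltonianCycle_count (d n : ℕ) (hd : 2 ≤ d) (hn : 2 ≤ n) :
    Nat.card {p : (v : Σ _ : Fin n, Fin d) ×
        (SimpleGraph.completeMultipartiteGraph (fun _ : Fin n => Fin d)).Walk v v //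
          p.2.IsHamiltonianCycle} =
      n.factorial * d.factorial ^ n * numB d n := by
  have hN : 4 ≤ n * d := Nat.mul_le_mul hn hd
  have : NeZero (n * d) := ⟨by omega⟩
  rw [aux_step1 _ (n * d) (by omega) (by simp)]
  have e1 : Nat.card {e : ZMod (n * d) ≃ (Σ _ : Fin n, Fin d) // ∀ i,
      (SimpleGraph.completeMultipartiteGraph (fun _ : Fin n => Fin d)).Adj (e i) (e (i+1))}
      = Nat.card {e : ZMod (n * d) ≃ (Σ _ : Fin n, Fin d) // ∀ i, (e i).1 ≠ (e (i+1)).1} := by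
    simp
  rw [e1]
  have hg : ∀ e : {e : ZMod (n * d) ≃ (Σ _ : Fin n, Fin d) // ∀ i, (e i).1 ≠ (e (i+1)).1},
      AuxGood d n (n * d) (fun x => (e.1 x).1) := by
    rintro ⟨e, he⟩
    refine ⟨?_, he⟩
    intro k
    rw [Nat.card_congr (e.subtypeEquiv (q := fun y => y.1 = k) (fun _ => Iff.rfl)),
      Nat.card_congr (Equiv.sigmaSubtype k)]
    simp
  rw [aux_card_fib (β := {c : ZMod (n * d) → Fin n // AuxGood d n (n * d) c})
    (fun e => ⟨_, hg e⟩) (d.factorial ^ n) (fun c => by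
      rw [← aux_step2 d n (n * d) c.1 c.2]
      simp only [Subtype.ext_iff])]
  rw [aux_card_fib (β := {P : Finset (Finset (ZMod (n * d))) //
      IsChordDiagram (n * d) d P ∧ ChordLoopless (n * d) P})
    (fun c => ⟨_, aux_diag_good d n (n * d) c.1 c.2⟩) n.factorial (fun P => by
      rw [← aux_step3 d n (n * d) rfl (by omega) P.1 P.2]
      simp only [Subtype.ext_iff])]
  rw [numB, ← Nat.card_coe_set_eq, Set.coe_ofPred]
  ring
end

section
/- Let d = 2. For every integer n ≥ 1, a(n,0) = (2n−2) · a(n−1,0) + a(n−1,1). -/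
def dl (j x : ℕ) : ℕ := if x < j then x else x + 1

theorem dl_inj (j : ℕ) : Function.Injective (dl j) := by
  intro x y h
  unfold dl at h
  split_ifs at h <;> omega

theorem dl_ne (j x : ℕ) : dl j x ≠ j := by
  unfold dl; split_ifs <;> omega

theorem dl_surj (j y : ℕ) (h : y ≠ j) : ∃ x, dl j x = y := by
  by_cases hy : y < j
  · exact ⟨y, by simp [dl, hy]⟩
  · refine ⟨y - 1, ?_⟩
    unfold dl
    split_ifs <;> omega

theorem mem_img (j x : ℕ) (b : Finset ℕ) : dl j x ∈ b.image (dl j) ↔ x ∈ b :=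
  (dl_inj j).mem_finset_image

theorem dl_set_surj (j : ℕ) (b : Finset ℕ) (h : j ∉ b) : ∃ c : Finset ℕ, c.image (dl j) = b := by
  refine ⟨b.preimage (dl j) (dl_inj j).injOn, ?_⟩
  ext y
  simp only [Finset.mem_image, Finset.mem_preimage]
  constructor
  · rintro ⟨x, hx, rfl⟩; exact hx
  · intro hy
    obtain ⟨x, rfl⟩ := dl_surj j y (by rintro rfl; exact h hy)
    exact ⟨x, hy, rfl⟩

theorem dlset_inj (j : ℕ) : Function.Injective (Finset.image (dl j)) :=
  Finset.image_injective (dl_inj j)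

def Phi (N j : ℕ) (Q : Finset (Finset ℕ)) : Finset (Finset ℕ) :=
  insert {j, N + 2} (Q.image (Finset.image (dl j)))

theorem mem_Phi (N j : ℕ) (Q : Finset (Finset ℕ)) (b : Finset ℕ) :
    b ∈ Phi N j Q ↔ b = {j, N + 2} ∨ ∃ c ∈ Q, c.image (dl j) = b := by
  simp [Phi]

theorem j_not_mem (j : ℕ) (c : Finset ℕ) : j ∉ c.image (dl j) := by
  simp only [Finset.mem_image, not_exists, not_and]
  intro x _ ; exact dl_ne j x

theorem dl_range (N j x : ℕ) (h1 : 1 ≤ j) (h2 : j ≤ N + 1) :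
    (1 ≤ x ∧ x ≤ N) ↔ (1 ≤ dl j x ∧ dl j x ≤ N + 1) := by
  unfold dl; split_ifs <;> omega

theorem top_not_mem (N j : ℕ) (h1 : 1 ≤ j) (h2 : j ≤ N + 1) (Q : Finset (Finset ℕ))
    (hQ : IsLinearDiagram N 2 Q) (c : Finset ℕ) (hc : c ∈ Q) : N + 2 ∉ c.image (dl j) := by
  simp only [Finset.mem_image, not_exists, not_and]
  intro x hx
  have := (dl_range N j x h1 h2).1 (by simpa using hQ.2.1 c hc x hx)
  omega

theorem diag_Phi (N j : ℕ) (h1 : 1 ≤ j) (h2 : j ≤ N + 1) (Q : Finset (Finset ℕ))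
    (hQ : IsLinearDiagram N 2 Q) : IsLinearDiagram (N + 2) 2 (Phi N j Q) := by
  refine ⟨?_, ?_, ?_⟩
  · intro b hb
    rcases (mem_Phi _ _ _ _).1 hb with rfl | ⟨c, hc, rfl⟩
    · exact Finset.card_pair (by omega)
    · rw [Finset.card_image_of_injective _ (dl_inj j)]; exact hQ.1 c hc
  · intro b hb x hx
    rcases (mem_Phi _ _ _ _).1 hb with rfl | ⟨c, hc, rfl⟩
    · simp at hx ⊢; omega
    · obtain ⟨y, hy, rfl⟩ := Finset.mem_image.1 hx
      have := (dl_range N j y h1 h2).1 (by simpa using hQ.2.1 c hc y hy)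
      simp; omega
  · intro x hx
    by_cases hx2 : x = j ∨ x = N + 2
    · refine ⟨{j, N + 2}, ⟨(mem_Phi _ _ _ _).2 (Or.inl rfl), by simpa using hx2⟩, ?_⟩
      rintro b ⟨hb, hxb⟩
      rcases (mem_Phi _ _ _ _).1 hb with rfl | ⟨c, hc, rfl⟩
      · rfl
      · exfalso
        rcases hx2 with rfl | rfl
        · exact j_not_mem _ _ hxb
        · exact top_not_mem N j h1 h2 Q hQ c hc hxb
    · push Not at hx2
      obtain ⟨y, rfl⟩ := dl_surj j x hx2.1
      have hy := (dl_range N j y h1 h2).2 (by simp at hx; omega)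
      obtain ⟨c, ⟨hc, hyc⟩, hu⟩ := hQ.2.2 y (by simpa using hy)
      refine ⟨c.image (dl j), ⟨(mem_Phi _ _ _ _).2 (Or.inr ⟨c, hc, rfl⟩), (mem_img _ _ _).2 hyc⟩, ?_⟩
      rintro b ⟨hb, hxb⟩
      rcases (mem_Phi _ _ _ _).1 hb with rfl | ⟨c', hc', rfl⟩
      · simp at hxb; omega
      · rw [hu c' ⟨hc', (mem_img _ _ _).1 hxb⟩]

theorem Phi_surj (N : ℕ) (P : Finset (Finset ℕ)) (hP : IsLinearDiagram (N + 2) 2 P) :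
    ∃ j Q, 1 ≤ j ∧ j ≤ N + 1 ∧ IsLinearDiagram N 2 Q ∧ Phi N j Q = P := by
  obtain ⟨p1, p2, p3⟩ := hP
  have huniq : ∀ x b c, b ∈ P → c ∈ P → x ∈ b → x ∈ c → b = c := by
    intro x b c hb hc hxb hxc
    exact (p3 x (p2 b hb x hxb)).unique ⟨hb, hxb⟩ ⟨hc, hxc⟩
  obtain ⟨B, ⟨hB, hNB⟩, -⟩ := p3 (N + 2) (by simp)
  obtain ⟨j, hjN, rfl⟩ : ∃ j, j ≠ N + 2 ∧ B = {j, N + 2} := by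
    obtain ⟨x, y, hxy, rfl⟩ := Finset.card_eq_two.1 (p1 B hB)
    simp at hNB
    rcases hNB with rfl | rfl
    · exact ⟨y, hxy.symm, Finset.pair_comm _ _⟩
    · exact ⟨x, hxy, rfl⟩
  have hj := p2 _ hB j (by simp)
  simp at hj
  have h1 : 1 ≤ j := hj.1
  have h2 : j ≤ N + 1 := by omega
  let Q : Finset (Finset ℕ) :=
    (P.erase {j, N + 2}).preimage (Finset.image (dl j)) (dlset_inj j).injOn
  have memQ : ∀ c, c ∈ Q ↔ (c.image (dl j) ≠ {j, N + 2} ∧ c.image (dl j) ∈ P) := by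
    intro c; simp [Q]
  have memQ' : ∀ c, c ∈ Q ↔ c.image (dl j) ∈ P := by
    intro c; rw [memQ]
    refine ⟨fun h => h.2, fun h => ⟨?_, h⟩⟩
    intro he
    have := j_not_mem j c
    rw [he] at this; simp at this
  refine ⟨j, Q, h1, h2, ⟨?_, ?_, ?_⟩, ?_⟩
  · intro c hc
    have := p1 _ ((memQ' c).1 hc)
    rwa [Finset.card_image_of_injective _ (dl_inj j)] at this
  · intro c hc x hx
    have hcP := (memQ' c).1 hc
    have hxm := (mem_img j x c).2 hx
    have h3 := p2 _ hcP _ hxm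
    have h4 : dl j x ≠ N + 2 := by
      intro he
      rw [he] at hxm
      exact ((memQ c).1 hc).1 (huniq (N + 2) _ _ hcP hB hxm (by simp))
    simp at h3
    simpa using (dl_range N j x h1 h2).2 (by omega)
  · intro x hx
    have hr := (dl_range N j x h1 h2).1 (by simpa using hx)
    obtain ⟨b, ⟨hb, hxb⟩, -⟩ := p3 (dl j x) (by simp; omega)
    have hjb : j ∉ b := by
      intro hjb
      have := huniq j _ _ hb hB hjb (by simp)
      subst this
      have := dl_ne j x
      simp at hxb; omega
    obtain ⟨c, rfl⟩ := dl_set_surj j b hjb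
    refine ⟨c, ⟨(memQ' c).2 hb, (mem_img _ _ _).1 hxb⟩, ?_⟩
    rintro c' ⟨hc', hxc'⟩
    exact dlset_inj j (huniq (dl j x) _ _ ((memQ' c').1 hc') hb ((mem_img _ _ _).2 hxc') hxb)
  · ext b
    rw [mem_Phi]
    constructor
    · rintro (rfl | ⟨c, hc, rfl⟩)
      · exact hB
      · exact (memQ' c).1 hc
    · intro hb
      by_cases hjb : j ∈ b
      · left; exact huniq j _ _ hb hB hjb (by simp)
      · right
        obtain ⟨c, rfl⟩ := dl_set_surj j b hjb
        exact ⟨c, (memQ' c).2 hb, rfl⟩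

theorem Phi_inj (N j j' : ℕ) (h1 : 1 ≤ j) (h2 : j ≤ N + 1) (h2' : j' ≤ N + 1) (Q Q' : Finset (Finset ℕ))
    (hQ : IsLinearDiagram N 2 Q)
    (h : Phi N j Q = Phi N j' Q') : j = j' ∧ Q = Q' := by
  have hD := diag_Phi N j h1 h2 Q hQ
  have ha : ({j, N + 2} : Finset ℕ) ∈ Phi N j Q := (mem_Phi _ _ _ _).2 (Or.inl rfl)
  have hb : ({j', N + 2} : Finset ℕ) ∈ Phi N j Q := h ▸ (mem_Phi _ _ _ _).2 (Or.inl rfl)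
  have he := (hD.2.2 (N + 2) (by simp)).unique ⟨ha, by simp⟩ ⟨hb, by simp⟩
  have hj : j = j' := by
    have : j ∈ ({j', N + 2} : Finset ℕ) := by rw [← he]; simp
    simp at this; omega
  subst hj
  refine ⟨rfl, ?_⟩
  have key : ∀ R : Finset (Finset ℕ), ∀ c, c ∈ R ↔ c.image (dl j) ∈ Phi N j R := by
    intro R c
    rw [mem_Phi]
    constructor
    · intro hc; exact Or.inr ⟨c, hc, rfl⟩
    · rintro (he | ⟨c', hc', he⟩)
      · have := j_not_mem j c
        rw [he] at this; simp at this
      · rw [← dlset_inj j he]; exact hc'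
  ext c
  rw [key Q, key Q', h]

def Lp (N : ℕ) (P : Finset (Finset ℕ)) : Set ℕ :=
  {i : ℕ | 1 ≤ i ∧ i + 1 ≤ N ∧ ∃ b ∈ P, i ∈ b ∧ i + 1 ∈ b}

theorem Lp_fin (N : ℕ) (P : Finset (Finset ℕ)) : (Lp N P).Finite :=
  (Set.finite_Iic N).subset (by rintro i ⟨_, h, _⟩; simp; omega)

theorem Lp_Phi (N j : ℕ) (h1 : 1 ≤ j) (h2 : j ≤ N + 1) (Q : Finset (Finset ℕ))
    (hQ : IsLinearDiagram N 2 Q) :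
    Lp (N + 2) (Phi N j Q) = ∅ ↔ (j ≤ N ∧ ∀ i ∈ Lp N Q, i + 1 = j) := by
  rw [Set.eq_empty_iff_forall_notMem]
  constructor
  · intro h
    constructor
    · by_contra hj
      have : j = N + 1 := by omega
      subst this
      exact h (N + 1) ⟨by omega, by omega, {N + 1, N + 2}, (mem_Phi _ _ _ _).2 (Or.inl rfl), by simp, by simp⟩
    · rintro i ⟨hi1, hi2, b, hb, hib, hib'⟩
      by_contra hne
      have hs : dl j (i + 1) = dl j i + 1 := by
        unfold dl; split_ifs <;> omega
      have r1 := (dl_range N j i h1 h2).1 (by omega)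
      refine h (dl j i) ⟨r1.1, by omega, b.image (dl j), (mem_Phi _ _ _ _).2 (Or.inr ⟨b, hb, rfl⟩),
        (mem_img _ _ _).2 hib, ?_⟩
      rw [← hs]; exact (mem_img _ _ _).2 hib'
  · rintro ⟨hj, h⟩ i ⟨hi1, hi2, b, hb, hib, hib'⟩
    rcases (mem_Phi _ _ _ _).1 hb with rfl | ⟨c, hc, rfl⟩
    · simp at hib hib'; omega
    · obtain ⟨x, hx, rfl⟩ := Finset.mem_image.1 hib
      obtain ⟨y, hy, hxy⟩ := Finset.mem_image.1 hib'
      have e : y = x + 1 ∧ y ≠ j := by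
        unfold dl at hxy; split_ifs at hxy <;> omega
      obtain ⟨rfl, hne⟩ := e
      have hx' := hQ.2.1 c hc x hx
      have hy' := hQ.2.1 c hc _ hy
      simp at hx' hy'
      exact hne (h x ⟨hx'.1, hy', c, hc, hx, hy⟩)

theorem diag_fin (N : ℕ) : {P : Finset (Finset ℕ) | IsLinearDiagram N 2 P}.Finite := by
  refine (Finset.finite_toSet (Finset.Icc 1 N).powerset.powerset).subset ?_
  intro P hP
  simp only [Finset.mem_coe, Finset.mem_powerset]
  intro b hb
  rw [Finset.mem_powerset]
  exact fun x hx => hP.2.1 b hb x hx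

theorem rec_aux (N : ℕ) :
    Set.ncard {P : Finset (Finset ℕ) | IsLinearDiagram (N + 2) 2 P ∧ (Lp (N + 2) P).ncard = 0}
    = N * Set.ncard {P : Finset (Finset ℕ) | IsLinearDiagram N 2 P ∧ (Lp N P).ncard = 0}
    + Set.ncard {P : Finset (Finset ℕ) | IsLinearDiagram N 2 P ∧ (Lp N P).ncard = 1} := by
  set A0 := {P : Finset (Finset ℕ) | IsLinearDiagram N 2 P ∧ (Lp N P).ncard = 0} with hA0
  set A1 := {P : Finset (Finset ℕ) | IsLinearDiagram N 2 P ∧ (Lp N P).ncard = 1} with hA1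
  have f0 : A0.Finite := (diag_fin N).subset fun P h => h.1
  have f1 : A1.Finite := (diag_fin N).subset fun P h => h.1
  let g : Finset (Finset ℕ) → ℕ × Finset (Finset ℕ) := fun Q => (sInf (Lp N Q) + 1, Q)
  have hg : Function.Injective g := fun a b h => (Prod.ext_iff.1 h).2
  let S : Set (ℕ × Finset (Finset ℕ)) := (Set.Icc 1 N ×ˢ A0) ∪ g '' A1
  have hS : ∀ j Q, (j, Q) ∈ S ↔ (1 ≤ j ∧ j ≤ N + 1 ∧ IsLinearDiagram N 2 Q ∧ Lp (N + 2) (Phi N j Q) = ∅) := by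
    intro j Q
    constructor
    · rintro (⟨hj, hQ, h0⟩ | ⟨Q', ⟨hQ, h1⟩, he⟩)
      · simp only [Set.mem_Icc] at hj
        refine ⟨hj.1, by omega, hQ, (Lp_Phi N j hj.1 (by omega) Q hQ).2 ⟨hj.2, ?_⟩⟩
        simp only at h0
        rw [Set.ncard_eq_zero (Lp_fin N Q)] at h0
        simp [h0]
      · obtain ⟨i, hi⟩ := Set.ncard_eq_one.1 h1
        simp only [g, Prod.mk.injEq] at he
        obtain ⟨rfl, rfl⟩ := he
        have him : i ∈ Lp N Q' := by rw [hi]; rfl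
        have := him.1
        have := him.2.1
        simp only [hi, csInf_singleton]
        refine ⟨by omega, by omega, hQ, (Lp_Phi N (i + 1) (by omega) (by omega) Q' hQ).2 ⟨by omega, ?_⟩⟩
        simp [hi]
    · rintro ⟨h1, h2, hQ, hL⟩
      obtain ⟨h3, h4⟩ := (Lp_Phi N j h1 h2 Q hQ).1 hL
      rcases Set.eq_empty_or_nonempty (Lp N Q) with he | ⟨i, hi⟩
      · left; exact ⟨⟨h1, h3⟩, hQ, by simp [he]⟩
      · right
        have : Lp N Q = {i} := by
          ext k; constructor
          · intro hk; have := h4 k hk; have := h4 i hi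
            simp only [Set.mem_singleton_iff]; omega
          · rintro rfl; exact hi
        exact ⟨Q, ⟨hQ, by simp [this]⟩, by simp [g, this, h4 i hi]⟩
  have himg : {P : Finset (Finset ℕ) | IsLinearDiagram (N + 2) 2 P ∧ (Lp (N + 2) P).ncard = 0}
      = (fun p : ℕ × Finset (Finset ℕ) => Phi N p.1 p.2) '' S := by
    ext P
    simp only [Set.mem_setOf_eq, Set.mem_image, Set.ncard_eq_zero (Lp_fin _ _)]
    constructor
    · rintro ⟨hP, hL⟩
      obtain ⟨j, Q, h1, h2, hQ, rfl⟩ := Phi_surj N P hP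
      exact ⟨(j, Q), (hS j Q).2 ⟨h1, h2, hQ, hL⟩, rfl⟩
    · rintro ⟨⟨j, Q⟩, hm, rfl⟩
      obtain ⟨h1, h2, hQ, hL⟩ := (hS j Q).1 hm
      exact ⟨diag_Phi N j h1 h2 Q hQ, hL⟩
  have hinj : Set.InjOn (fun p : ℕ × Finset (Finset ℕ) => Phi N p.1 p.2) S := by
    rintro ⟨j, Q⟩ hm ⟨j', Q'⟩ hm' h
    obtain ⟨h1, h2, hQ, -⟩ := (hS j Q).1 hm
    obtain ⟨-, h2', -, -⟩ := (hS j' Q').1 hm'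
    obtain ⟨rfl, rfl⟩ := Phi_inj N j j' h1 h2 h2' Q Q' hQ h
    rfl
  rw [himg, Set.ncard_image_of_injOn hinj, Set.ncard_union_eq _ ((Set.finite_Icc 1 N).prod f0) (f1.image g),
    Set.ncard_prod, Set.ncard_image_of_injective _ hg]
  · congr 2
    rw [← Finset.coe_Icc, Set.ncard_coe_finset]; simp
  · rw [Set.disjoint_left]
    rintro ⟨j, Q⟩ ⟨-, -, h0⟩ ⟨Q', ⟨-, h1⟩, he⟩
    simp only [g, Prod.mk.injEq] at he
    obtain ⟨-, rfl⟩ := he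
    simp only at h0
    omega

/-- for `d = 2` and `n ≥ 1`, `a(n,0) = (2n−2)·a(n−1,0) + a(n−1,1)`. -/
theorem linear_rec_two_zero (n : ℕ) (hn : 1 ≤ n) :
    numA 2 n 0 = (2 * n - 2) * numA 2 (n - 1) 0 + numA 2 (n - 1) 1 := by
  obtain ⟨m, rfl⟩ : ∃ m, n = m + 1 := ⟨n - 1, by omega⟩
  have h := rec_aux (m * 2)
  have e1 : (m + 1) * 2 = m * 2 + 2 := by ring
  have e2 : 2 * (m + 1) - 2 = m * 2 := by omega
  rw [e2, Nat.add_sub_cancel]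
  unfold numA
  rw [e1]
  exact h
end

section
/- Let d = 2. For every integer n ≥ 1, a(n,1) = (2n−1) · a(n−1,0) + a(n−1,1). -/
def insF (i x : ℕ) : ℕ := if x < i then x else x + 2

def insG (i x : ℕ) : ℕ := if x < i then x else x - 2

lemma insF_inj (i : ℕ) : Function.Injective (insF i) := by
  intro x y h
  unfold insF at h
  split_ifs at h <;> omega

def insD (i : ℕ) (Q : Finset (Finset ℕ)) : Finset (Finset ℕ) :=
  insert {i, i + 1} (Q.image (Finset.image (insF i)))

lemma insF_ne (i x : ℕ) : insF i x ≠ i ∧ insF i x ≠ i + 1 := by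
  unfold insF; split_ifs <;> omega

lemma not_mem_img (i : ℕ) (b : Finset ℕ) : i ∉ b.image (insF i) ∧ i + 1 ∉ b.image (insF i) := by
  constructor <;> intro h <;> obtain ⟨x, _, hx⟩ := Finset.mem_image.1 h
  · exact (insF_ne i x).1 hx
  · exact (insF_ne i x).2 hx

lemma pair_not_mem (i : ℕ) (Q : Finset (Finset ℕ)) :
    ({i, i + 1} : Finset ℕ) ∉ Q.image (Finset.image (insF i)) := by
  intro h
  obtain ⟨b, _, hb⟩ := Finset.mem_image.1 h
  apply (not_mem_img i b).1
  rw [hb]; simp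

lemma insD_inj (i : ℕ) : Function.Injective (insD i) := by
  intro Q R h
  unfold insD at h
  have h2 := congrArg (fun s => s.erase {i, i + 1}) h
  simp only [Finset.erase_insert (pair_not_mem i _)] at h2
  exact Finset.image_injective (Finset.image_injective (insF_inj i)) h2

lemma insF_insG (i x : ℕ) (h1 : x ≠ i) (h2 : x ≠ i + 1) : insF i (insG i x) = x := by
  unfold insF insG; split_ifs <;> omega

lemma img_img (i : ℕ) (b : Finset ℕ) (h1 : i ∉ b) (h2 : i + 1 ∉ b) :
    (b.image (insG i)).image (insF i) = b := by
  rw [Finset.image_image]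
  conv_rhs => rw [← Finset.image_id (s := b)]
  apply Finset.image_congr
  intro x hx
  exact insF_insG i x (fun h => h1 (h ▸ hx)) (fun h => h2 (h ▸ hx))

lemma insD_LD {N i : ℕ} (h1 : 1 ≤ i) (h2 : i ≤ N + 1) {Q : Finset (Finset ℕ)}
    (hQ : IsLinearDiagram N 2 Q) : IsLinearDiagram (N + 2) 2 (insD i Q) := by
  obtain ⟨hc, hr, hu⟩ := hQ
  refine ⟨?_, ?_, ?_⟩
  · intro b hb
    rcases Finset.mem_insert.1 hb with rfl | hb
    · exact Finset.card_pair (by omega)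
    · obtain ⟨c, hcQ, rfl⟩ := Finset.mem_image.1 hb
      rw [Finset.card_image_of_injective _ (insF_inj i)]
      exact hc c hcQ
  · intro b hb x hx
    rcases Finset.mem_insert.1 hb with rfl | hb
    · simp only [Finset.mem_insert, Finset.mem_singleton] at hx
      simp only [Finset.mem_Icc]; omega
    · obtain ⟨c, hcQ, rfl⟩ := Finset.mem_image.1 hb
      obtain ⟨y, hy, rfl⟩ := Finset.mem_image.1 hx
      have := hr c hcQ y hy
      simp only [Finset.mem_Icc] at this ⊢
      unfold insF; split_ifs <;> omega
  · intro x hx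
    by_cases hxi : x = i ∨ x = i + 1
    · refine ⟨{i, i + 1}, ⟨by simp [insD], by simpa using hxi⟩, ?_⟩
      rintro b ⟨hb, hxb⟩
      rcases Finset.mem_insert.1 hb with rfl | hb
      · rfl
      · obtain ⟨c, hcQ, rfl⟩ := Finset.mem_image.1 hb
        rcases hxi with rfl | rfl
        · exact absurd hxb (not_mem_img _ c).1
        · exact absurd hxb (not_mem_img _ c).2
    · push Not at hxi
      have hfg := insF_insG i x hxi.1 hxi.2
      have hg : insG i x ∈ Finset.Icc 1 N := by
        simp only [Finset.mem_Icc] at hx ⊢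
        unfold insG; split_ifs <;> omega
      obtain ⟨c, ⟨hcQ, hxc⟩, huc⟩ := hu _ hg
      refine ⟨c.image (insF i), ⟨Finset.mem_insert_of_mem (Finset.mem_image_of_mem _ hcQ),
        Finset.mem_image.2 ⟨_, hxc, hfg⟩⟩, ?_⟩
      rintro b ⟨hb, hxb⟩
      rcases Finset.mem_insert.1 hb with rfl | hb
      · simp only [Finset.mem_insert, Finset.mem_singleton] at hxb
        omega
      · obtain ⟨e, heQ, rfl⟩ := Finset.mem_image.1 hb
        obtain ⟨y, hy, hyx⟩ := Finset.mem_image.1 hxb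
        have : y = insG i x := insF_inj i (hyx.trans hfg.symm)
        subst this
        simp only at huc
        rw [huc e ⟨heQ, hy⟩]

lemma insD_surj {N i : ℕ} {P : Finset (Finset ℕ)}
    (hP : IsLinearDiagram (N + 2) 2 P) (hi : ({i, i + 1} : Finset ℕ) ∈ P) :
    ∃ Q, IsLinearDiagram N 2 Q ∧ insD i Q = P := by
  obtain ⟨hc, hr, hu⟩ := hP
  have hi1 := hr _ hi i (by simp)
  have hi2 := hr _ hi (i + 1) (by simp)
  have hblk : ∀ b ∈ P, b ≠ {i, i + 1} → i ∉ b ∧ i + 1 ∉ b := by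
    intro b hb hne
    constructor <;> intro hm <;> apply hne
    · exact (hu _ hi1).unique ⟨hb, hm⟩ ⟨hi, by simp⟩
    · exact (hu _ hi2).unique ⟨hb, hm⟩ ⟨hi, by simp⟩
  simp only [Finset.mem_Icc] at hi1 hi2
  refine ⟨(P.erase {i, i + 1}).image (Finset.image (insG i)), ?_, ?_⟩
  swap
  · unfold insD
    rw [Finset.image_image]
    have : (P.erase {i, i + 1}).image (Finset.image (insF i) ∘ Finset.image (insG i))
        = P.erase {i, i + 1} := by
      conv_rhs => rw [← Finset.image_id (s := P.erase {i, i + 1})]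
      apply Finset.image_congr
      intro b hb
      have hb := Finset.mem_erase.1 (Finset.mem_coe.1 hb)
      have := hblk b hb.2 hb.1
      exact img_img i b this.1 this.2
    rw [this, Finset.insert_erase hi]
  · have hQ : ∀ b ∈ (P.erase {i, i + 1}).image (Finset.image (insG i)), b.image (insF i) ∈ P := by
      intro b hb
      obtain ⟨c, hcP, rfl⟩ := Finset.mem_image.1 hb
      have hcP := Finset.mem_erase.1 hcP
      have := hblk c hcP.2 hcP.1
      rw [img_img i c this.1 this.2]
      exact hcP.2
    refine ⟨?_, ?_, ?_⟩
    · intro b hb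
      rw [← Finset.card_image_of_injective b (insF_inj i)]
      exact hc _ (hQ b hb)
    · intro b hb x hx
      have := hr _ (hQ b hb) _ (Finset.mem_image_of_mem _ hx)
      simp only [Finset.mem_Icc] at this ⊢
      unfold insF at this
      split_ifs at this <;> omega
    · intro x hx
      have hf : insF i x ∈ Finset.Icc 1 (N + 2) := by
        simp only [Finset.mem_Icc] at hx ⊢
        unfold insF; split_ifs <;> omega
      obtain ⟨c, ⟨hcP, hxc⟩, huc⟩ := hu _ hf
      have hne : c ≠ {i, i + 1} := by
        rintro rfl
        simp only [Finset.mem_insert, Finset.mem_singleton] at hxc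
        have := insF_ne i x
        omega
      refine ⟨c.image (insG i), ⟨Finset.mem_image_of_mem _ (Finset.mem_erase.2 ⟨hne, hcP⟩), ?_⟩, ?_⟩
      · refine Finset.mem_image.2 ⟨_, hxc, ?_⟩
        unfold insF insG; split_ifs <;> omega
      · rintro b ⟨hb, hxb⟩
        have h1 := huc _ ⟨hQ b hb, Finset.mem_image_of_mem _ hxb⟩
        have h2 := hblk c hcP hne
        apply Finset.image_injective (insF_inj i)
        rw [img_img i c h2.1 h2.2]
        exact h1

lemma loops_eq {N : ℕ} {P : Finset (Finset ℕ)} (hP : IsLinearDiagram N 2 P) :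
    linLoops N P = Set.ncard {i : ℕ | ({i, i + 1} : Finset ℕ) ∈ P} := by
  unfold linLoops
  congr 1
  ext i
  simp only [Set.mem_ofPred_eq]
  constructor
  · rintro ⟨_, _, b, hb, h1, h2⟩
    have : ({i, i + 1} : Finset ℕ) = b := by
      apply Finset.eq_of_subset_of_card_le
      · intro x hx
        simp only [Finset.mem_insert, Finset.mem_singleton] at hx
        rcases hx with rfl | rfl <;> assumption
      · rw [hP.1 b hb, Finset.card_pair (by omega)]
    rw [this]; exact hb
  · intro h
    have h1 := hP.2.1 _ h i (by simp)
    have h2 := hP.2.1 _ h (i + 1) (by simp)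
    simp only [Finset.mem_Icc] at h1 h2
    exact ⟨h1.1, h2.2, _, h, by simp, by simp⟩

lemma loops_fin (P : Finset (Finset ℕ)) : {i : ℕ | ({i, i + 1} : Finset ℕ) ∈ P}.Finite := by
  apply Set.Finite.preimage (f := fun i : ℕ => ({i, i + 1} : Finset ℕ)) _ P.finite_toSet
  intro a _ b _ h
  have h1 : a ∈ ({b, b + 1} : Finset ℕ) := by simp only at h; rw [← h]; simp
  have h2 : b ∈ ({a, a + 1} : Finset ℕ) := by simp only at h; rw [h]; simp
  simp only [Finset.mem_insert, Finset.mem_singleton] at h1 h2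
  omega

lemma loop_insD_of (i j : ℕ) (Q : Finset (Finset ℕ)) (h : ({j, j + 1} : Finset ℕ) ∈ insD i Q)
    (hj : j ≠ i) : ∃ k, ({k, k + 1} : Finset ℕ) ∈ Q ∧ k + 1 ≠ i ∧ insF i k = j := by
  rcases Finset.mem_insert.1 h with h | h
  · have h1 : j ∈ ({i, i + 1} : Finset ℕ) := by rw [← h]; simp
    have h2 : i ∈ ({j, j + 1} : Finset ℕ) := by rw [h]; simp
    simp only [Finset.mem_insert, Finset.mem_singleton] at h1 h2
    omega
  · obtain ⟨c, hc, he⟩ := Finset.mem_image.1 h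
    have h1 : j ∈ c.image (insF i) := by rw [he]; simp
    have h2 : j + 1 ∈ c.image (insF i) := by rw [he]; simp
    obtain ⟨k, hk, rfl⟩ := Finset.mem_image.1 h1
    obtain ⟨l, hl, hlk⟩ := Finset.mem_image.1 h2
    have hl' : l = k + 1 ∧ k + 1 ≠ i := by
      unfold insF at hlk; split_ifs at hlk <;> omega
    refine ⟨k, ?_, hl'.2, rfl⟩
    have : c = {k, k + 1} := by
      apply Finset.image_injective (insF_inj i)
      rw [he, Finset.image_insert, Finset.image_singleton, ← hl'.1, hlk]
    rw [← this]; exact hc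

lemma loop_insD (i k : ℕ) (Q : Finset (Finset ℕ)) (h : ({k, k + 1} : Finset ℕ) ∈ Q)
    (hk : k + 1 ≠ i) : ({insF i k, insF i k + 1} : Finset ℕ) ∈ insD i Q := by
  apply Finset.mem_insert_of_mem
  refine Finset.mem_image.2 ⟨_, h, ?_⟩
  rw [Finset.image_insert, Finset.image_singleton]
  have : insF i (k + 1) = insF i k + 1 := by
    unfold insF; split_ifs <;> omega
  rw [this]

lemma insD_loops (i : ℕ) (Q : Finset (Finset ℕ)) :
    {j : ℕ | ({j, j + 1} : Finset ℕ) ∈ insD i Q} = {i} ↔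
      ∀ k : ℕ, ({k, k + 1} : Finset ℕ) ∈ Q → k + 1 = i := by
  constructor
  · intro h k hk
    by_contra hne
    have : insF i k ∈ ({i} : Set ℕ) := by
      rw [← h]; exact loop_insD i k Q hk hne
    exact (insF_ne i k).1 this
  · intro h
    ext j
    simp only [Set.mem_ofPred_eq, Set.mem_singleton_iff]
    constructor
    · intro hj
      by_contra hne
      obtain ⟨k, hk, hk2, _⟩ := loop_insD_of i j Q hj hne
      exact hk2 (h k hk)
    · rintro rfl
      simp [insD]

lemma LD_fin (N : ℕ) : {P | IsLinearDiagram N 2 P}.Finite := by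
  apply Set.Finite.subset ((Finset.Icc 1 N).powerset.powerset).finite_toSet
  intro P hP
  simp only [Finset.mem_coe, Finset.mem_powerset]
  intro b hb
  rw [Finset.mem_powerset]
  exact fun x hx => hP.2.1 b hb x hx

lemma main_rec (N : ℕ) :
    Set.ncard {P | IsLinearDiagram (N + 2) 2 P ∧ linLoops (N + 2) P = 1} =
    (N + 1) * Set.ncard {P | IsLinearDiagram N 2 P ∧ linLoops N P = 0} +
      Set.ncard {P | IsLinearDiagram N 2 P ∧ linLoops N P = 1} := by
  set A0 := {P | IsLinearDiagram N 2 P ∧ linLoops N P = 0} with hA0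
  set A1 := {P | IsLinearDiagram N 2 P ∧ linLoops N P = 1} with hA1
  set T0 : Set (ℕ × Finset (Finset ℕ)) := (↑(Finset.Icc 1 (N + 1)) : Set ℕ) ×ˢ A0 with hT0
  set T1 : Set (ℕ × Finset (Finset ℕ)) :=
    {q | q.2 ∈ A1 ∧ {k : ℕ | ({k, k + 1} : Finset ℕ) ∈ q.2} = {q.1 - 1} ∧ 1 ≤ q.1} with hT1
  have fA0 : A0.Finite := (LD_fin N).subset fun P h => h.1
  have fA1 : A1.Finite := (LD_fin N).subset fun P h => h.1
  have inj1 : Set.InjOn Prod.snd T1 := by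
    rintro ⟨i, Q⟩ ⟨_, h2, h3⟩ ⟨j, R⟩ ⟨_, h5, h6⟩ h
    simp only at h h2 h3 h5 h6
    subst h
    rw [h2] at h5
    have := Set.singleton_eq_singleton_iff.1 h5
    have : i = j := by omega
    rw [this]
  have im1 : Prod.snd '' T1 = A1 := by
    ext Q
    constructor
    · rintro ⟨q, hq, rfl⟩; exact hq.1
    · intro hQ
      have h1 := hQ.2
      rw [loops_eq hQ.1] at h1
      obtain ⟨k, hk⟩ := Set.ncard_eq_one.1 h1
      exact ⟨(k + 1, Q), ⟨hQ, hk, by simp⟩, rfl⟩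
  have c1 : T1.ncard = A1.ncard := by rw [← im1, Set.ncard_image_of_injOn inj1]
  have c0 : T0.ncard = (N + 1) * A0.ncard := by
    rw [hT0, Set.ncard_prod, Set.ncard_coe_finset]; simp
  have fT0 : T0.Finite := (Finset.finite_toSet _).prod fA0
  have fT1 : T1.Finite := Set.Finite.of_finite_image (by rw [im1]; exact fA1) inj1
  have dj : Disjoint T0 T1 := by
    rw [Set.disjoint_left]
    rintro q h0 h1
    have a := h0.2.2
    have b := h1.1.2
    omega
  have mem : ∀ i Q, (i, Q) ∈ T0 ∪ T1 ↔ (1 ≤ i ∧ i ≤ N + 1) ∧ IsLinearDiagram N 2 Q ∧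
      ∀ k : ℕ, ({k, k + 1} : Finset ℕ) ∈ Q → k + 1 = i := by
    intro i Q
    constructor
    · rintro (⟨h1, h2, h3⟩ | ⟨⟨h1, h2⟩, h3, h4⟩)
      · simp only [Finset.coe_Icc, Set.mem_Icc] at h1
        refine ⟨h1, h2, ?_⟩
        simp only at h2 h3
        rw [loops_eq h2, Set.ncard_eq_zero (loops_fin Q)] at h3
        intro k hk
        have : k ∈ (∅ : Set ℕ) := by rw [← h3]; exact hk
        exact absurd this (by simp)
      · simp only at h1 h2 h3 h4
        have hm : i - 1 ∈ {k : ℕ | ({k, k + 1} : Finset ℕ) ∈ Q} := by rw [h3]; simp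
        have := h1.2.1 _ hm (i - 1) (by simp)
        simp only [Finset.mem_Icc] at this
        refine ⟨by omega, h1, ?_⟩
        intro k hk
        have : k ∈ ({i - 1} : Set ℕ) := by rw [← h3]; exact hk
        simp only [Set.mem_singleton_iff] at this
        omega
    · rintro ⟨hi, hQ, hl⟩
      by_cases he : ({i - 1, i - 1 + 1} : Finset ℕ) ∈ Q
      · right
        have hs : {k : ℕ | ({k, k + 1} : Finset ℕ) ∈ Q} = {i - 1} := by
          ext k
          simp only [Set.mem_ofPred_eq, Set.mem_singleton_iff]
          constructor
          · intro hk; have := hl k hk; omega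
          · rintro rfl; exact he
        refine ⟨⟨hQ, ?_⟩, hs, hi.1⟩
        rw [loops_eq hQ]
        exact Set.ncard_eq_one.2 ⟨_, hs⟩
      · left
        refine ⟨by simpa using hi, hQ, ?_⟩
        simp only
        rw [loops_eq hQ, Set.ncard_eq_zero (loops_fin Q)]
        ext k
        simp only [Set.mem_ofPred_eq, Set.mem_empty_iff_false, iff_false]
        intro hk
        have := hl k hk
        apply he
        have e : i - 1 = k := by omega
        rw [e]; exact hk
  have im : (fun q : ℕ × Finset (Finset ℕ) => insD q.1 q.2) '' (T0 ∪ T1) =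
      {P | IsLinearDiagram (N + 2) 2 P ∧ linLoops (N + 2) P = 1} := by
    ext P
    constructor
    · rintro ⟨⟨i, Q⟩, hq, rfl⟩
      obtain ⟨hi, hQ, hl⟩ := (mem i Q).1 hq
      have h := insD_LD hi.1 hi.2 hQ
      refine ⟨h, ?_⟩
      rw [loops_eq h]
      exact Set.ncard_eq_one.2 ⟨i, (insD_loops i Q).2 hl⟩
    · rintro ⟨hP, hl⟩
      rw [loops_eq hP] at hl
      obtain ⟨i, hi⟩ := Set.ncard_eq_one.1 hl
      have him : i ∈ {k : ℕ | ({k, k + 1} : Finset ℕ) ∈ P} := by rw [hi]; simp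
      have b1 := hP.2.1 _ him i (by simp)
      have b2 := hP.2.1 _ him (i + 1) (by simp)
      simp only [Finset.mem_Icc] at b1 b2
      obtain ⟨Q, hQ, rfl⟩ := insD_surj hP him
      exact ⟨(i, Q), (mem i Q).2 ⟨by omega, hQ, (insD_loops i Q).1 hi⟩, rfl⟩
  have inj : Set.InjOn (fun q : ℕ × Finset (Finset ℕ) => insD q.1 q.2) (T0 ∪ T1) := by
    rintro ⟨i, Q⟩ h1 ⟨j, R⟩ h2 h
    simp only at h
    have e1 := (insD_loops i Q).2 ((mem i Q).1 h1).2.2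
    have e2 := (insD_loops j R).2 ((mem j R).1 h2).2.2
    rw [h, e2] at e1
    have := Set.singleton_eq_singleton_iff.1 e1
    subst this
    rw [insD_inj _ h]
  rw [← im, Set.ncard_image_of_injOn inj, Set.ncard_union_eq dj fT0 fT1, c0, c1]

/-- for `d = 2` and `n ≥ 1`, `a(n,1) = (2n−1)·a(n−1,0) + a(n−1,1)`. -/
theorem linear_rec_two_one (n : ℕ) (hn : 1 ≤ n) :
    numA 2 n 1 = (2 * n - 1) * numA 2 (n - 1) 0 + numA 2 (n - 1) 1 := by
  obtain ⟨m, rfl⟩ : ∃ m, n = m + 1 := ⟨n - 1, by omega⟩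
  have h := main_rec (m * 2)
  have e1 : (m + 1) * 2 = m * 2 + 2 := by ring
  have e2 : 2 * (m + 1) - 1 = m * 2 + 1 := by omega
  unfold numA
  rw [Nat.add_sub_cancel, e1, e2]
  exact h
end
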